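/- Let σ > 0, μ ∈ {1, −1} and T₀ > 0. Let u : ℝ × [−T₀,T₀] → ℝ be a smooth solution of the mKdV equation ∂_t u + ∂_x³ u + μ u² ∂_x u = 0 such that for every t ∈ [−T₀,T₀] the function U(·,t) defined by the spatial Fourier multiplier U(x,t) = (1/(2π)) ∫_ℝ e^{ixξ} cosh(σ|ξ|) 𝓕_x u(ξ,t) dξ is well defined and Schwartz in x, uniformly enough in t to differentiate under the integral sign. Define A_σ(t) = ∫_ℝ U(x,t)² dx + ∫_ℝ (∂_x U(x,t))² dx + ∫_ℝ (∂_x² U(x,t))² dx − (μ/6) ∫_ℝ U(x,t)⁴ dx − (5μ/3) ∫_ℝ U(x,t)² (∂_x U(x,t))² dx + (1/18) ∫_ℝ U(x,t)⁶ dx. Then there exist b ∈ (1/2, 1) and a constant C > 0, independent of u, σ and T₀, such that for every t ∈ [0,T₀] and every Schwartz function v : ℝ² → ℝ with v(x,t′) = u(x,t′) for all (x,t′) ∈ ℝ × [−T₀,T₀], one has A_σ(t) ≤ A_σ(0) + C σ² N⁴ (1 + N² + N⁴), where N = ( ∫_{ℝ²} cosh²(σ|ξ|) (1+|ξ|)⁴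 (1+|τ−ξ³|)^{2b} |v̂(ξ,τ)|² dξ dτ )^{1/2}. -/

import Mathlib

open MeasureTheory ENNReal

/-!
Multiplying frequencies by `e^{σξ}` is a complex translation, so `e^{±σD}` commutes with products
and maps solutions of mKdV to formal solutions. Averaging the equations for `e^{σD}u` and
`e^{-σD}u` shows that `U = cosh(σD)u` solves mKdV up to the forcing
`-μ (Y² ∂ₓU + 2 U Y ∂ₓY)` with `Y = sinh(σD)u`. Each term contains two factors `Y`, and
`|sinh(σξ)| ≤ σ|ξ| cosh(σξ)` trades each of them for a power of `σ` and a derivative.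

By the first three conservation laws of mKdV, the modified energy of `U` changes only through this
forcing. In the resulting space-time integral, every term is a product of four factors, which are
split into two pairs estimated in `L²` by bilinear Bourgain space estimates, times undifferentiated
powers of `U` and `∂ₓU`, which are bounded in the supremum norm by the Sobolev embedding.
-/

namespace MKdV

open Complex Filter Topology
open scoped FourierTransform SchwartzMap

section FourierL2

variable {V : Type*} [NormedAddCommGroup V] [InnerProductSpace ℝ V] [FiniteDimensional ℝ V]
  [MeasurableSpace V] [BorelSpace V]

lemma continuous_fourier {g : V → ℂ} (hg : Integrable g) : Continuous (𝓕 g) :=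
  VectorFourier.fourierIntegral_continuous Real.continuous_fourierChar
    (by exact continuous_inner) hg

lemma integral_schwartz_mul_fourier {g : V → ℂ} (hg : Integrable g) (Φ : 𝓢(V, ℂ)) :
    ∫ x, Φ x * 𝓕 g x = ∫ x, 𝓕 Φ x * g x := by
  have h := VectorFourier.integral_bilin_fourierIntegral_eq_flip (ContinuousLinearMap.mul ℂ ℂ)
    (L := innerₗ V) (μ := (volume : Measure V)) (ν := (volume : Measure V))
    Real.continuous_fourierChar (by exact continuous_inner) Φ.integrable hg
  simp only [ContinuousLinearMap.mul_apply', flip_innerₗ] at h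
  exact h.symm

lemma ae_eq_of_integral_schwartz_mul_eq {f g : V → ℂ} (hf : LocallyIntegrable f)
    (hg : LocallyIntegrable g) (h : ∀ Φ : 𝓢(V, ℂ), ∫ x, Φ x * f x = ∫ x, Φ x * g x) :
    f =ᵐ[volume] g := by
  refine ae_eq_of_integral_contDiff_smul_eq hf hg fun φ hφ hφc => ?_
  have hs : ContDiff ℝ (⊤ : ℕ∞) fun x => (φ x : ℂ) := Complex.ofRealCLM.contDiff.comp hφ
  have hc : HasCompactSupport fun x => (φ x : ℂ) := hφc.comp_left (g := Complex.ofReal) rfl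
  simpa only [Complex.real_smul, HasCompactSupport.toSchwartzMap_toFun hc hs]
    using h (hc.toSchwartzMap hs)

lemma coeFn_fourier_toLp {g : V → ℂ} (h₁ : Integrable g) (h₂ : MemLp g 2) :
    ((𝓕 (h₂.toLp g) : Lp (α := V) ℂ 2) : V → ℂ) =ᵐ[volume] 𝓕 g := by
  refine ae_eq_of_integral_schwartz_mul_eq ((Lp.memLp _).locallyIntegrable one_le_two)
    (continuous_fourier h₁).locallyIntegrable fun Φ => ?_
  have h := congrArg (fun T : 𝓢'(V, ℂ) => T Φ) (Lp.fourier_toTemperedDistribution_eq (h₂.toLp g))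
  simp only [TemperedDistribution.fourier_apply, Lp.toTemperedDistribution_apply,
    smul_eq_mul] at h
  rw [← h, integral_schwartz_mul_fourier h₁]
  refine integral_congr_ae ?_
  filter_upwards [h₂.coeFn_toLp] with x hx
  rw [hx]

lemma lintegral_enorm_sq_fourier {g : V → ℂ} (h₁ : Integrable g) (h₂ : MemLp g 2) :
    ∫⁻ x, ‖𝓕 g x‖ₑ ^ 2 = ∫⁻ ξ, ‖g ξ‖ₑ ^ 2 := by
  have h : eLpNorm (𝓕 g) 2 volume = eLpNorm g 2 volume := by
    rw [← eLpNorm_congr_ae (coeFn_fourier_toLp h₁ h₂), ← eLpNorm_congr_ae h₂.coeFn_toLp,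
      ← Lp.enorm_def, ← Lp.enorm_def, ← ofReal_norm, ← ofReal_norm, Lp.norm_fourier_eq]
  have hsq (f : V → ℂ) : ∫⁻ x, ‖f x‖ₑ ^ 2 = eLpNorm f 2 volume ^ 2 := by
    simpa using (eLpNorm_nnreal_pow_eq_lintegral (f := f) (μ := volume) two_ne_zero).symm
  rw [hsq, hsq, h]

end FourierL2

/-- The Fourier transform `∫ e^{-iyξ} f(y) dy` in the angular-frequency convention of the theorem
(Mathlib's `𝓕` has `e^{-2πiyξ}`). -/
noncomputable def angFourier (f : ℝ → ℂ) (ξ : ℝ) : ℂ := ∫ y : ℝ, cexp (-I * y * ξ) * f y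

/-- The inverse `(2π)⁻¹ ∫ e^{ixξ} g(ξ) dξ` of `angFourier`. -/
noncomputable def angFourierInv (g : ℝ → ℂ) (x : ℝ) : ℂ :=
  (1 / (2 * Real.pi) : ℂ) * ∫ ξ : ℝ, cexp (I * x * ξ) * g ξ

lemma norm_cexp_I_mul_mul (x ξ : ℝ) : ‖cexp (I * x * ξ)‖ = 1 := by
  rw [mul_assoc, ← Complex.ofReal_mul, norm_exp_I_mul_ofReal]

lemma norm_cexp_neg_I_mul_mul (x ξ : ℝ) : ‖cexp (-I * x * ξ)‖ = 1 := by
  simpa using norm_cexp_I_mul_mul (-x) ξ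

lemma norm_one_div_two_pi_le_one : ‖(1 / (2 * Real.pi) : ℂ)‖ ≤ 1 := by
  rw [norm_div, norm_mul, norm_one, norm_ofNat, norm_real, Real.norm_of_nonneg Real.pi_pos.le,
    div_le_one (by positivity)]
  linarith [Real.pi_gt_three]

lemma norm_angFourier_le (f : ℝ → ℂ) (ξ : ℝ) : ‖angFourier f ξ‖ ≤ ∫ y, ‖f y‖ := by
  refine (norm_integral_le_integral_norm _).trans_eq ?_
  simp only [norm_mul, norm_cexp_neg_I_mul_mul, one_mul]

lemma enorm_angFourierInv_le (g : ℝ → ℂ) (x : ℝ) : ‖angFourierInv g x‖ₑ ≤ ∫⁻ ξ, ‖g ξ‖ₑ := by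
  have hpi : ‖(1 / (2 * Real.pi) : ℂ)‖ₑ ≤ 1 := by
    simpa [← ofReal_norm] using ENNReal.ofReal_le_one.2 norm_one_div_two_pi_le_one
  have hexp (ξ : ℝ) : ‖cexp (I * x * ξ)‖ₑ = 1 := by
    rw [← ofReal_norm, norm_cexp_I_mul_mul, ENNReal.ofReal_one]
  rw [angFourierInv, enorm_mul]
  refine (mul_le_of_le_one_left zero_le hpi).trans
    ((enorm_integral_le_lintegral_enorm _).trans_eq ?_)
  simp only [enorm_mul, hexp, one_mul]

lemma integrable_cexp_I_mul {g : ℝ → ℂ} (hg : Integrable g) (x : ℝ) :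
    Integrable fun ξ : ℝ => cexp (I * x * ξ) * g ξ :=
  hg.bdd_mul (c := 1) (by fun_prop) (.of_forall fun ξ => (norm_cexp_I_mul_mul x ξ).le)

lemma angFourierInv_add {g₁ g₂ : ℝ → ℂ} (h₁ : Integrable g₁) (h₂ : Integrable g₂) (x : ℝ) :
    angFourierInv (fun ξ => g₁ ξ + g₂ ξ) x = angFourierInv g₁ x + angFourierInv g₂ x := by
  simp only [angFourierInv, mul_add (cexp _),
    integral_add (integrable_cexp_I_mul h₁ x) (integrable_cexp_I_mul h₂ x)]
  ring

lemma angFourierInv_const_mul (c : ℂ) (g : ℝ → ℂ) (x : ℝ) :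
    angFourierInv (fun ξ => c * g ξ) x = c * angFourierInv g x := by
  simp only [angFourierInv, mul_left_comm _ c, integral_const_mul]

lemma hasDerivAt_angFourierInv {g : ℝ → ℂ} (hg : Integrable g)
    (hg' : Integrable fun ξ : ℝ => I * ξ * g ξ) (x : ℝ) :
    HasDerivAt (angFourierInv g) (angFourierInv (fun ξ : ℝ => I * ξ * g ξ) x) x := by
  have hexp (ξ y : ℝ) : HasDerivAt (fun y : ℝ => cexp (I * y * ξ) * g ξ)
      (cexp (I * y * ξ) * (I * ξ * g ξ)) y := by
    have h : HasDerivAt (fun y : ℝ => I * (y : ℂ) * ξ) (I * ξ) y := by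
      simpa using (ofRealCLM.hasDerivAt.const_mul I).mul_const (ξ : ℂ)
    simpa only [mul_assoc] using h.cexp.mul_const (g ξ)
  refine ((hasDerivAt_integral_of_dominated_loc_of_deriv_le (bound := fun ξ => ‖I * ξ * g ξ‖)
    univ_mem ?_ (integrable_cexp_I_mul hg x) (integrable_cexp_I_mul hg' x).aestronglyMeasurable
    ?_ hg'.norm (.of_forall fun ξ y _ => hexp ξ y)).2).const_mul _
  · exact .of_forall fun y => (integrable_cexp_I_mul hg y).aestronglyMeasurable
  · refine .of_forall fun ξ y _ => ?_
    rw [norm_mul (cexp _), norm_cexp_I_mul_mul, one_mul]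

lemma angFourier_eq_fourier (f : ℝ → ℂ) (ξ : ℝ) : angFourier f ξ = 𝓕 f (ξ / (2 * Real.pi)) := by
  rw [Real.fourier_real_eq_integral_exp_smul, angFourier]
  refine integral_congr_ae (.of_forall fun y => ?_)
  have hπ : (Real.pi : ℂ) ≠ 0 := ofReal_ne_zero.2 Real.pi_ne_zero
  simp only [smul_eq_mul]
  congr 2
  push_cast
  field_simp

lemma continuous_angFourier {f : ℝ → ℂ} (hf : Integrable f) : Continuous (angFourier f) := by
  rw [show angFourier f = fun ξ => 𝓕 f (ξ / (2 * Real.pi)) from funext (angFourier_eq_fourier f)]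
  exact (continuous_fourier hf).comp (continuous_id.div_const _)

lemma angFourierInv_angFourier {f : ℝ → ℂ} (hc : Continuous f) (hf : Integrable f)
    (hF : Integrable (angFourier f)) (x : ℝ) : angFourierInv (angFourier f) x = f x := by
  have hπ : (2 * Real.pi : ℝ) ≠ 0 := by positivity
  have hπ' : (Real.pi : ℂ) ≠ 0 := ofReal_ne_zero.2 Real.pi_ne_zero
  have hscale : angFourier f = fun ξ => 𝓕 f (ξ / (2 * Real.pi)) :=
    funext (angFourier_eq_fourier f)
  have hint : Integrable (𝓕 f) := by
    rwa [hscale, integrable_comp_div_iff _ hπ] at hF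
  have hsubst : ∫ ξ : ℝ, cexp (I * x * ξ) * angFourier f ξ =
      ∫ ξ : ℝ, (fun η : ℝ => cexp ((2 * Real.pi * inner ℝ η x : ℝ) * I) • 𝓕 f η)
        (ξ / (2 * Real.pi)) := by
    refine integral_congr_ae (.of_forall fun ξ => ?_)
    simp only [hscale, smul_eq_mul, RCLike.inner_apply, conj_trivial]
    congr 2
    push_cast
    field_simp
  rw [angFourierInv, hsubst, Measure.integral_comp_div
    (fun η : ℝ => cexp ((2 * Real.pi * inner ℝ η x : ℝ) * I) • 𝓕 f η), ← Real.fourierInv_eq',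
    congrFun (hc.fourierInv_fourier_eq hf hint) x, abs_of_pos (by positivity), real_smul]
  push_cast
  field_simp

lemma angFourierInv_eq_angFourier_neg (g : ℝ → ℂ) (x : ℝ) :
    angFourierInv g x = 1 / (2 * Real.pi) * angFourier g (-x) := by
  rw [angFourierInv, angFourier]
  congr 1
  refine integral_congr_ae (.of_forall fun ξ => ?_)
  simp only [ofReal_neg]
  congr 2
  ring

lemma angFourier_angFourierInv {g : ℝ → ℂ} (hc : Continuous g) (hg : Integrable g)
    (hG : Integrable (angFourierInv g)) (ξ : ℝ) : angFourier (angFourierInv g) ξ = g ξ := by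
  have hπ : (Real.pi : ℂ) ≠ 0 := ofReal_ne_zero.2 Real.pi_ne_zero
  have hneg (x : ℝ) : angFourier g x = 2 * Real.pi * angFourierInv g (-x) := by
    rw [angFourierInv_eq_angFourier_neg, neg_neg]
    field_simp
  have hint : Integrable (angFourier g) := by
    rw [funext hneg]
    exact hG.comp_neg.const_mul _
  rw [← angFourierInv_angFourier hc hg hint ξ, angFourierInv, angFourier, ← integral_neg_eq_self,
    ← integral_const_mul]
  refine integral_congr_ae (.of_forall fun x => ?_)
  simp only [hneg, ofReal_neg, mul_neg, neg_mul, neg_neg]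
  rw [mul_right_comm I]
  field_simp

lemma lintegral_enorm_sq_angFourierInv_le {g : ℝ → ℂ} (hg : Integrable g) :
    ∫⁻ x, ‖angFourierInv g x‖ₑ ^ 2 ≤ ∫⁻ ξ, ‖g ξ‖ₑ ^ 2 := by
  by_cases hfin : ∫⁻ ξ, ‖g ξ‖ₑ ^ 2 = ∞
  · exact hfin ▸ le_top
  have h₂ : MemLp g 2 := by
    refine ⟨hg.1, ?_⟩
    rw [eLpNorm_lt_top_iff_lintegral_rpow_enorm_lt_top two_ne_zero ofNat_ne_top]
    simpa using lt_top_iff_ne_top.2 hfin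
  set c : ℝ := -(2 * Real.pi)⁻¹ with hc
  have hc₀ : c ≠ 0 := by simp [hc]
  have hc₁ : ‖(1 / (2 * Real.pi) : ℂ)‖ₑ ^ 2 * ENNReal.ofReal |c⁻¹| ≤ 1 := by
    rw [← ofReal_norm, ← ENNReal.ofReal_pow (norm_nonneg _), ← ENNReal.ofReal_mul (by positivity),
      ENNReal.ofReal_le_one]
    have hn : ‖(1 / (2 * Real.pi) : ℂ)‖ = |c| := by
      rw [hc, abs_neg, abs_of_pos (by positivity)]
      simp [abs_of_pos Real.pi_pos]
    rw [hn, abs_inv, sq, mul_assoc, mul_inv_cancel₀ (abs_ne_zero.2 hc₀), mul_one, ← hn]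
    exact norm_one_div_two_pi_le_one
  have hmeas : Measurable fun y => ‖𝓕 g y‖ₑ ^ 2 :=
    (continuous_fourier hg).measurable.enorm.pow_const 2
  have hscale (x : ℝ) : angFourierInv g x = 1 / (2 * Real.pi) * 𝓕 g (c * x) := by
    rw [angFourierInv_eq_angFourier_neg, angFourier_eq_fourier, hc]
    congr 2
    field_simp
  simp only [hscale, enorm_mul, mul_pow]
  rw [lintegral_const_mul' _ _ (by finiteness), ← lintegral_map hmeas (measurable_const_mul c),
    Real.map_volume_mul_left hc₀, lintegral_smul_measure, lintegral_enorm_sq_fourier hg h₂,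
    smul_eq_mul, ← mul_assoc]
  exact mul_le_of_le_one_left zero_le hc₁

section WeightedConv

lemma sq_lintegral_mul_le {α : Type*} [MeasurableSpace α] {ν : Measure α} {f g : α → ℝ≥0∞}
    (hf : AEMeasurable f ν) (hg : AEMeasurable g ν) :
    (∫⁻ a, f a * g a ∂ν) ^ 2 ≤ (∫⁻ a, f a ^ 2 ∂ν) * ∫⁻ a, g a ^ 2 ∂ν := by
  calc (∫⁻ a, f a * g a ∂ν) ^ 2
      ≤ ((∫⁻ a, f a ^ (2 : ℝ) ∂ν) ^ (1 / 2 : ℝ) * (∫⁻ a, g a ^ (2 : ℝ) ∂ν) ^ (1 / 2 : ℝ)) ^ 2 := by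
        gcongr
        exact ENNReal.lintegral_mul_le_Lp_mul_Lq ν .two_two hf hg
    _ = (∫⁻ a, f a ^ 2 ∂ν) * ∫⁻ a, g a ^ 2 ∂ν := by
        rw [mul_pow, ← ENNReal.rpow_natCast, ← ENNReal.rpow_natCast, ← ENNReal.rpow_mul,
          ← ENNReal.rpow_mul]
        norm_num

lemma add_sq_le_two_mul (a b : ℝ≥0∞) : (a + b) ^ 2 ≤ 2 * (a ^ 2 + b ^ 2) := by
  have h := ENNReal.rpow_add_le_mul_rpow_add_rpow a b one_le_two
  norm_num at h
  exact h

variable {G : Type*} [AddCommGroup G] [MeasureSpace G]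

/-- The convolution of `k₁` and `k₂` with the bilinear multiplier `m` inserted; at `p` it bounds the
Fourier transform at `p` of the product of two functions. -/
noncomputable def weightedConv (m : G → G → ℝ≥0∞) (k₁ k₂ : G → ℝ≥0∞) (p : G) : ℝ≥0∞ :=
  ∫⁻ q, m q (p - q) * (k₁ q * k₂ (p - q))

variable {m m₁ m₂ : G → G → ℝ≥0∞} {k₁ k₂ l₁ l₂ w₁ w₂ : G → ℝ≥0∞} {K : ℝ≥0∞}

lemma weightedConv_mono (hm : ∀ q r, m₁ q r * (k₁ q * k₂ r) ≤ m₂ q r * (l₁ q * l₂ r)) (p : G) :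
    weightedConv m₁ k₁ k₂ p ≤ weightedConv m₂ l₁ l₂ p :=
  lintegral_mono fun q => hm q (p - q)

variable [MeasurableAdd₂ G] [MeasurableNeg G]

lemma weightedConv_add_weight (hm : Measurable (Function.uncurry m₁)) (h₁ : Measurable k₁)
    (h₂ : Measurable k₂) (p : G) :
    weightedConv (fun q r => m₁ q r + m₂ q r) k₁ k₂ p =
      weightedConv m₁ k₁ k₂ p + weightedConv m₂ k₁ k₂ p := by
  have : Measurable fun q => m₁ q (p - q) :=
    hm.comp (f := fun q => (q, p - q)) (by fun_prop)
  simp only [weightedConv, add_mul]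
  exact lintegral_add_left (by fun_prop) _

variable [SFinite (volume : Measure G)]

@[fun_prop]
lemma measurable_weightedConv (hm : Measurable (Function.uncurry m)) (h₁ : Measurable k₁)
    (h₂ : Measurable k₂) : Measurable (weightedConv m k₁ k₂) := by
  have h : Measurable fun z : G × G => m z.2 (z.1 - z.2) * (k₁ z.2 * k₂ (z.1 - z.2)) :=
    (hm.comp (f := fun z : G × G => (z.2, z.1 - z.2)) (by fun_prop)).mul (by fun_prop)
  exact h.lintegral_prod_right'

variable [(volume : Measure G).IsAddRightInvariant]

lemma lintegral_lintegral_comp_sub {f : G → G → ℝ≥0∞} (hf : Measurable (Function.uncurry f)) :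
    ∫⁻ p, ∫⁻ q, f q (p - q) = ∫⁻ q, ∫⁻ r, f q r := by
  have h : Measurable fun z : G × G => f z.2 (z.1 - z.2) :=
    hf.comp (f := fun z : G × G => (z.2, z.1 - z.2)) (by fun_prop)
  rw [lintegral_lintegral_swap h.aemeasurable]
  exact lintegral_congr fun q => lintegral_sub_right_eq_self (f q) q

lemma lintegral_sq_weightedConv_le_of_fiber (hm : Measurable (Function.uncurry m))
    (hw₁ : Measurable w₁) (hw₂ : Measurable w₂) (h₁ : Measurable k₁) (h₂ : Measurable k₂)
    (hK : ∀ p, ∫⁻ q, m q (p - q) ^ 2 * (w₁ q ^ 2 * w₂ (p - q) ^ 2) ≤ K) :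
    ∫⁻ p, weightedConv m (fun q => w₁ q * k₁ q) (fun q => w₂ q * k₂ q) p ^ 2 ≤
      K * ((∫⁻ q, k₁ q ^ 2) * ∫⁻ q, k₂ q ^ 2) := by
  have hpoint (p : G) : weightedConv m (fun q => w₁ q * k₁ q) (fun q => w₂ q * k₂ q) p ^ 2 ≤
      K * ∫⁻ q, k₁ q ^ 2 * k₂ (p - q) ^ 2 := by
    have : Measurable fun q => m q (p - q) :=
      hm.comp (f := fun q => (q, p - q)) (by fun_prop)
    calc weightedConv m (fun q => w₁ q * k₁ q) (fun q => w₂ q * k₂ q) p ^ 2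
        = (∫⁻ q, (m q (p - q) * (w₁ q * w₂ (p - q))) * (k₁ q * k₂ (p - q))) ^ 2 := by
          simp only [weightedConv, mul_assoc, mul_left_comm (k₁ _)]
      _ ≤ (∫⁻ q, (m q (p - q) * (w₁ q * w₂ (p - q))) ^ 2) * ∫⁻ q, (k₁ q * k₂ (p - q)) ^ 2 :=
          sq_lintegral_mul_le (by fun_prop) (by fun_prop)
      _ ≤ K * ∫⁻ q, k₁ q ^ 2 * k₂ (p - q) ^ 2 := by
          simp only [mul_pow]
          gcongr
          exact hK p
  refine (lintegral_mono hpoint).trans_eq ?_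
  rw [lintegral_const_mul, lintegral_lintegral_comp_sub (f := fun q r => k₁ q ^ 2 * k₂ r ^ 2)]
  · simp only [lintegral_const_mul _ (h₂.pow_const 2), lintegral_mul_const _ (h₁.pow_const 2)]
  · exact ((h₁.comp measurable_fst).pow_const 2).mul ((h₂.comp measurable_snd).pow_const 2)
  · have h : Measurable fun z : G × G => k₁ z.2 ^ 2 * k₂ (z.1 - z.2) ^ 2 := by fun_prop
    exact h.lintegral_prod_right'

lemma lintegral_sq_weightedConv_le_of_slice (hm : Measurable (Function.uncurry m))
    (hw : Measurable w₁) (h₁ : Measurable k₁) (h₂ : Measurable k₂)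
    (hK : ∀ r, ∫⁻ q, m q r ^ 2 * w₁ q ^ 2 ≤ K) :
    ∫⁻ p, weightedConv m (fun q => w₁ q * k₁ q) k₂ p ^ 2 ≤
      K * ((∫⁻ q, k₁ q ^ 2) * ∫⁻ q, k₂ q ^ 2) := by
  have hmeas : Measurable fun z : G × G => m z.1 z.2 ^ 2 * w₁ z.1 ^ 2 * k₂ z.2 ^ 2 :=
    ((hm.pow_const 2).mul (by fun_prop)).mul (by fun_prop)
  have hpoint (p : G) : weightedConv m (fun q => w₁ q * k₁ q) k₂ p ^ 2 ≤
      (∫⁻ q, k₁ q ^ 2) * ∫⁻ q, m q (p - q) ^ 2 * w₁ q ^ 2 * k₂ (p - q) ^ 2 := by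
    have : Measurable fun q => m q (p - q) :=
      hm.comp (f := fun q => (q, p - q)) (by fun_prop)
    calc weightedConv m (fun q => w₁ q * k₁ q) k₂ p ^ 2
        = (∫⁻ q, k₁ q * (m q (p - q) * w₁ q * k₂ (p - q))) ^ 2 := by
          refine congrArg (· ^ 2) (lintegral_congr fun q => ?_)
          ring
      _ ≤ (∫⁻ q, k₁ q ^ 2) * ∫⁻ q, (m q (p - q) * w₁ q * k₂ (p - q)) ^ 2 :=
          sq_lintegral_mul_le (by fun_prop) (by fun_prop)
      _ = _ := by simp only [mul_pow]
  calc ∫⁻ p, weightedConv m (fun q => w₁ q * k₁ q) k₂ p ^ 2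
      ≤ (∫⁻ q, k₁ q ^ 2) * ∫⁻ p, ∫⁻ q, m q (p - q) ^ 2 * w₁ q ^ 2 * k₂ (p - q) ^ 2 := by
        rw [← lintegral_const_mul]
        · exact lintegral_mono hpoint
        · exact (hmeas.comp (g := fun z : G × G => m z.1 z.2 ^ 2 * w₁ z.1 ^ 2 * k₂ z.2 ^ 2)
            (f := fun z : G × G => (z.2, z.1 - z.2)) (by fun_prop)).lintegral_prod_right'
    _ = (∫⁻ q, k₁ q ^ 2) * ∫⁻ r, (∫⁻ q, m q r ^ 2 * w₁ q ^ 2) * k₂ r ^ 2 := by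
        rw [lintegral_lintegral_comp_sub (f := fun q r => m q r ^ 2 * w₁ q ^ 2 * k₂ r ^ 2) hmeas,
          lintegral_lintegral_swap hmeas.aemeasurable]
        congr 1
        refine lintegral_congr fun r => ?_
        have : Measurable fun q => m q r := hm.comp (f := fun q => (q, r)) (by fun_prop)
        exact lintegral_mul_const _ (by fun_prop)
    _ ≤ (∫⁻ q, k₁ q ^ 2) * ∫⁻ r, K * k₂ r ^ 2 := by
        gcongr with r
        exact hK r
    _ = K * ((∫⁻ q, k₁ q ^ 2) * ∫⁻ q, k₂ q ^ 2) := by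
        rw [lintegral_const_mul _ (h₂.pow_const 2)]
        ring

end WeightedConv

/-- The weight `⟨l⟩^{-s}` with `⟨l⟩ = 1 + |l|`. -/
noncomputable def decay (s l : ℝ) : ℝ≥0∞ := ENNReal.ofReal ((1 + |l|) ^ (-s))

/-- The total mass of the weight `⟨l⟩^{-s}`. -/
noncomputable def decayMass (s : ℝ) : ℝ≥0∞ := ∫⁻ l, decay s l

lemma decay_sq (s l : ℝ) : decay s l ^ 2 = decay (2 * s) l := by
  rw [decay, decay, ← ENNReal.ofReal_pow (by positivity), ← Real.rpow_natCast,
    ← Real.rpow_mul (by positivity)]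
  congr 2
  push_cast
  ring

lemma decay_le_one {s : ℝ} (hs : 0 ≤ s) (l : ℝ) : decay s l ≤ 1 :=
  ENNReal.ofReal_le_one.2 <|
    Real.rpow_le_one_of_one_le_of_nonpos (le_add_of_nonneg_right (abs_nonneg l)) (neg_nonpos.2 hs)

@[fun_prop]
lemma measurable_decay (s : ℝ) : Measurable (decay s) := by
  unfold decay
  fun_prop

lemma decay_anti {s : ℝ} (hs : 0 ≤ s) {l l' : ℝ} (h : |l| ≤ |l'|) : decay s l' ≤ decay s l :=
  ENNReal.ofReal_le_ofReal <|
    Real.rpow_le_rpow_of_nonpos (by positivity) (by linarith) (neg_nonpos.2 hs)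

lemma decay_mul_decay_le {s : ℝ} (hs : 0 ≤ s) (l l' : ℝ) :
    decay s l * decay s l' ≤ decay s ((l + l') / 2) * (decay s l + decay s l') := by
  have hmid : |(l + l') / 2| ≤ (|l| + |l'|) / 2 := by
    rw [abs_div, abs_two]
    gcongr
    exact abs_add_le l l'
  rcases le_total |l| |l'| with h | h
  · calc decay s l * decay s l' ≤ decay s l * decay s ((l + l') / 2) := by
          gcongr
          exact decay_anti hs (by linarith)
      _ ≤ _ := by
          rw [mul_comm]
          gcongr
          exact le_self_add
  · calc decay s l * decay s l' ≤ decay s ((l + l') / 2) * decay s l' := by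
          gcongr
          exact decay_anti hs (by linarith)
      _ ≤ _ := by
          gcongr
          exact le_add_self

lemma decayMass_lt_top {s : ℝ} (hs : 1 < s) : decayMass s < ∞ := by
  simpa [decayMass, decay] using
    (integrable_one_add_norm (E := ℝ) (μ := volume) (r := s) (by simpa using hs)).lintegral_lt_top

lemma lintegral_decay_sub_right (s c : ℝ) : ∫⁻ l, decay s (l - c) = decayMass s :=
  lintegral_sub_right_eq_self (decay s) c

lemma lintegral_decay_sub_left (s c : ℝ) : ∫⁻ l, decay s (c - l) = decayMass s :=
  lintegral_sub_left_eq_self (decay s) c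

lemma lintegral_decay_half_sub_left (s c : ℝ) :
    ∫⁻ l, decay s ((c - l) / 2) = 2 * decayMass s := by
  have h := lintegral_map (μ := volume) (measurable_decay s) (measurable_const_mul (2⁻¹ : ℝ))
  rw [Real.map_volume_mul_left (by norm_num), lintegral_smul_measure] at h
  simp only [inv_inv, abs_two, smul_eq_mul, ENNReal.ofReal_ofNat] at h
  rw [lintegral_sub_left_eq_self (fun l => decay s (l / 2)) c, decayMass, h]
  simp only [div_eq_inv_mul]

/-- The modulation `τ - ξ³`, the distance of a frequency `(ξ, τ)` to the Airy curve. -/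
def modulation (p : ℝ × ℝ) : ℝ := p.2 - p.1 ^ 3

@[fun_prop]
lemma measurable_modulation : Measurable modulation := by
  unfold modulation
  fun_prop

lemma hasDerivAt_cube_add_cube_sub (ξ x : ℝ) :
    HasDerivAt (fun x => x ^ 3 + (ξ - x) ^ 3) (3 * (x ^ 2 - (ξ - x) ^ 2)) x := by
  refine (((hasDerivAt_id' x).pow 3).add (((hasDerivAt_id' x).const_sub ξ).pow 3)).congr_deriv ?_
  push_cast
  ring

-- The substitution `y = x³ + (ξ - x)³`, injective on `S`, has Jacobian `3 |x² - (ξ - x)²|`.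
lemma setLIntegral_resonance_le {ξ : ℝ} (hξ : ξ ≠ 0) {S : Set ℝ} (hS : MeasurableSet S)
    (hinj : ∀ a ∈ S, ∀ b ∈ S, a + b = ξ → a = b) (s τ : ℝ) :
    ∫⁻ x in S, ENNReal.ofReal |x ^ 2 - (ξ - x) ^ 2| * decay s ((τ - (x ^ 3 + (ξ - x) ^ 3)) / 2) ≤
      2 * decayMass s := by
  have hcube : Set.InjOn (fun x => x ^ 3 + (ξ - x) ^ 3) S := by
    intro a ha b hb hab
    have h : ξ * ((a - b) * (a + b - ξ)) = 0 := by
      simp only at hab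
      linear_combination hab / 3
    rcases mul_eq_zero.1 ((mul_eq_zero.1 h).resolve_left hξ) with h | h
    · exact sub_eq_zero.1 h
    · exact hinj a ha b hb (sub_eq_zero.1 h)
  calc _ ≤ ∫⁻ x in S, ENNReal.ofReal |3 * (x ^ 2 - (ξ - x) ^ 2)| *
        decay s ((τ - (x ^ 3 + (ξ - x) ^ 3)) / 2) := by
        refine lintegral_mono fun x => mul_le_mul' (ENNReal.ofReal_le_ofReal ?_) le_rfl
        rw [abs_mul, abs_of_pos (by norm_num : (0 : ℝ) < 3)]
        linarith [abs_nonneg (x ^ 2 - (ξ - x) ^ 2)]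
    _ = ∫⁻ y in (fun x => x ^ 3 + (ξ - x) ^ 3) '' S, decay s ((τ - y) / 2) :=
        (lintegral_image_eq_lintegral_abs_deriv_mul hS
          (fun x _ => (hasDerivAt_cube_add_cube_sub ξ x).hasDerivWithinAt) hcube
          fun y => decay s ((τ - y) / 2)).symm
    _ ≤ ∫⁻ y, decay s ((τ - y) / 2) := setLIntegral_le_lintegral _ _
    _ = 2 * decayMass s := lintegral_decay_half_sub_left s τ

lemma lintegral_resonance_le (s ξ τ : ℝ) :
    ∫⁻ x, ENNReal.ofReal |x ^ 2 - (ξ - x) ^ 2| * decay s ((τ - (x ^ 3 + (ξ - x) ^ 3)) / 2) ≤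
      4 * decayMass s := by
  rcases eq_or_ne ξ 0 with rfl | hξ
  · simp
  rw [← lintegral_add_compl _ (measurableSet_Ioi (a := ξ / 2)),
    show (4 : ℝ≥0∞) * decayMass s = 2 * decayMass s + 2 * decayMass s by ring]
  refine add_le_add (setLIntegral_resonance_le hξ measurableSet_Ioi ?_ s τ)
    (setLIntegral_resonance_le hξ measurableSet_Ioi.compl ?_ s τ) <;>
  · intro a ha b hb hab
    simp only [Set.mem_compl_iff, Set.mem_Ioi, not_lt] at ha hb
    linarith

lemma lintegral_transversal_mul_decay_le {s : ℝ} (hs : 0 ≤ s) (p : ℝ × ℝ) :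
    ∫⁻ q : ℝ × ℝ, ENNReal.ofReal |q.1 ^ 2 - (p.1 - q.1) ^ 2| *
      (decay s (modulation q) * decay s (modulation (p - q))) ≤ 8 * decayMass s ^ 2 := by
  rw [Measure.volume_eq_prod, lintegral_prod _ (by fun_prop)]
  have htime (x : ℝ) : ∫⁻ t, ENNReal.ofReal |x ^ 2 - (p.1 - x) ^ 2| *
      (decay s (modulation (x, t)) * decay s (modulation (p - (x, t)))) ≤ 2 * decayMass s *
      (ENNReal.ofReal |x ^ 2 - (p.1 - x) ^ 2| *
        decay s ((p.2 - (x ^ 3 + (p.1 - x) ^ 3)) / 2)) := by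
    calc _ ≤ ∫⁻ t, ENNReal.ofReal |x ^ 2 - (p.1 - x) ^ 2| *
          (decay s ((p.2 - (x ^ 3 + (p.1 - x) ^ 3)) / 2) *
            (decay s (t - x ^ 3) + decay s (p.2 - (p.1 - x) ^ 3 - t))) := by
          refine lintegral_mono fun t => mul_le_mul' le_rfl ?_
          have hmod : modulation (p - (x, t)) = p.2 - (p.1 - x) ^ 3 - t := by
            simp only [modulation, Prod.fst_sub, Prod.snd_sub]
            ring
          rw [hmod]
          refine (decay_mul_decay_le hs (t - x ^ 3) (p.2 - (p.1 - x) ^ 3 - t)).trans_eq ?_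
          congr 3
          ring
      _ = _ := by
          rw [lintegral_const_mul _ (by fun_prop), lintegral_const_mul _ (by fun_prop),
            lintegral_add_left (by fun_prop), lintegral_decay_sub_right,
            lintegral_decay_sub_left]
          ring
  calc _ ≤ ∫⁻ x, 2 * decayMass s * (ENNReal.ofReal |x ^ 2 - (p.1 - x) ^ 2| *
        decay s ((p.2 - (x ^ 3 + (p.1 - x) ^ 3)) / 2)) := lintegral_mono htime
    _ ≤ 2 * decayMass s * (4 * decayMass s) := by
        rw [lintegral_const_mul _ (by fun_prop)]
        gcongr
        exact lintegral_resonance_le s p.1 p.2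
    _ = 8 * decayMass s ^ 2 := by ring

/-- The pairs of spatial frequencies that nearly agree up to sign. -/
def resonantSet : Set (ℝ × ℝ) := {z | |z.1 + z.2| ≤ 1 ∨ |z.1 - z.2| ≤ 1}

lemma measurableSet_resonantSet : MeasurableSet resonantSet :=
  (measurableSet_le (f := fun z : ℝ × ℝ => |z.1 + z.2|) (by fun_prop) measurable_const).union
    (measurableSet_le (f := fun z : ℝ × ℝ => |z.1 - z.2|) (by fun_prop) measurable_const)

/-- The indicator function of `resonantSet`. -/
noncomputable def resonantInd (x y : ℝ) : ℝ≥0∞ := resonantSet.indicator (fun _ => 1) (x, y)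

@[fun_prop]
lemma measurable_resonantInd {α : Type*} [MeasurableSpace α] {f g : α → ℝ} (hf : Measurable f)
    (hg : Measurable g) : Measurable fun a => resonantInd (f a) (g a) :=
  (measurable_const.indicator measurableSet_resonantSet).comp (hf.prodMk hg)

lemma resonantInd_sq (x y : ℝ) : resonantInd x y ^ 2 = resonantInd x y := by
  by_cases h : (x, y) ∈ resonantSet <;> simp [resonantInd, h]

lemma lintegral_resonantInd_le (y : ℝ) : ∫⁻ x, resonantInd x y ≤ 4 := by
  have hset : {x | (x, y) ∈ resonantSet} ⊆ Set.Icc (-y - 1) (-y + 1) ∪ Set.Icc (y - 1) (y + 1) := by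
    rintro x (h | h) <;> rw [abs_le] at h
    · exact .inl ⟨by linarith, by linarith⟩
    · exact .inr ⟨by linarith, by linarith⟩
  have hmeas : MeasurableSet {x | (x, y) ∈ resonantSet} :=
    measurableSet_resonantSet.preimage (measurable_id.prodMk measurable_const)
  calc ∫⁻ x, resonantInd x y = volume {x | (x, y) ∈ resonantSet} := by
        rw [← lintegral_indicator_one hmeas]
        rfl
    _ ≤ volume (Set.Icc (-y - 1) (-y + 1)) + volume (Set.Icc (y - 1) (y + 1)) :=
        (measure_mono hset).trans (measure_union_le _ _)
    _ = 4 := by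
        rw [Real.volume_Icc, Real.volume_Icc, ← ENNReal.ofReal_add (by linarith) (by linarith)]
        ring_nf
        norm_num

/-- The multiplier gained in the bilinear estimate: the square root of the transversality
`|x² - y²|` of the Airy curve at two frequencies, plus the indicator of the resonant set. -/
noncomputable def bilinearWeight (x y : ℝ) : ℝ≥0∞ :=
  ENNReal.ofReal √|x ^ 2 - y ^ 2| + resonantInd x y

/-- The constant of the bilinear estimate. -/
noncomputable def bilinearConst (b : ℝ) : ℝ≥0∞ :=
  2 * (8 * decayMass (2 * b) ^ 2 + 4 * decayMass (2 * b))

lemma bilinearConst_lt_top {b : ℝ} (hb : 1 / 2 < b) : bilinearConst b < ∞ := by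
  have := (decayMass_lt_top (s := 2 * b) (by linarith)).ne
  exact lt_top_iff_ne_top.2 (by unfold bilinearConst; finiteness)

section Bilinear

variable {b : ℝ} {k₁ k₂ : ℝ × ℝ → ℝ≥0∞}

lemma lintegral_sq_weightedConv_transversal_le (hb : 0 ≤ b) (h₁ : Measurable k₁)
    (h₂ : Measurable k₂) :
    ∫⁻ p, weightedConv (fun q r : ℝ × ℝ => ENNReal.ofReal √|q.1 ^ 2 - r.1 ^ 2|)
      (fun q => decay b (modulation q) * k₁ q) (fun q => decay b (modulation q) * k₂ q) p ^ 2 ≤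
    8 * decayMass (2 * b) ^ 2 * ((∫⁻ q, k₁ q ^ 2) * ∫⁻ q, k₂ q ^ 2) := by
  refine lintegral_sq_weightedConv_le_of_fiber (by unfold Function.uncurry; fun_prop)
    (by fun_prop) (by fun_prop) h₁ h₂ fun p => ?_
  simp only [decay_sq, ← ENNReal.ofReal_pow (Real.sqrt_nonneg _), Real.sq_sqrt (abs_nonneg _)]
  exact lintegral_transversal_mul_decay_le (by positivity) p

lemma lintegral_sq_weightedConv_resonant_le (hb : 0 ≤ b) (h₁ : Measurable k₁)
    (h₂ : Measurable k₂) :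
    ∫⁻ p, weightedConv (fun q r : ℝ × ℝ => resonantInd q.1 r.1)
      (fun q => decay b (modulation q) * k₁ q) (fun q => decay b (modulation q) * k₂ q) p ^ 2 ≤
    4 * decayMass (2 * b) * ((∫⁻ q, k₁ q ^ 2) * ∫⁻ q, k₂ q ^ 2) := by
  have hdrop (p : ℝ × ℝ) : weightedConv (fun q r : ℝ × ℝ => resonantInd q.1 r.1)
      (fun q => decay b (modulation q) * k₁ q) (fun q => decay b (modulation q) * k₂ q) p ≤
      weightedConv (fun q r : ℝ × ℝ => resonantInd q.1 r.1)
      (fun q => decay b (modulation q) * k₁ q) k₂ p :=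
    weightedConv_mono (fun q r => by
      gcongr
      exact mul_le_of_le_one_left zero_le (decay_le_one hb _)) p
  refine (lintegral_mono fun p => pow_le_pow_left' (hdrop p) 2).trans
    (lintegral_sq_weightedConv_le_of_slice (by unfold Function.uncurry; fun_prop) (by fun_prop)
      h₁ h₂ fun r => ?_)
  simp only [decay_sq, resonantInd_sq]
  rw [Measure.volume_eq_prod, lintegral_prod _ (by fun_prop)]
  have htime (x : ℝ) : ∫⁻ t, resonantInd x r.1 * decay (2 * b) (modulation (x, t)) =
      resonantInd x r.1 * decayMass (2 * b) := by
    rw [lintegral_const_mul _ (by fun_prop), ← lintegral_decay_sub_right _ (x ^ 3)]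
    rfl
  simp only [htime]
  rw [lintegral_mul_const _ (by fun_prop)]
  gcongr
  exact lintegral_resonantInd_le r.1

lemma lintegral_sq_weightedConv_bilinearWeight_le (hb : 0 ≤ b) (h₁ : Measurable k₁)
    (h₂ : Measurable k₂) :
    ∫⁻ p, weightedConv (fun q r : ℝ × ℝ => bilinearWeight q.1 r.1)
      (fun q => decay b (modulation q) * k₁ q) (fun q => decay b (modulation q) * k₂ q) p ^ 2 ≤
    bilinearConst b * ((∫⁻ q, k₁ q ^ 2) * ∫⁻ q, k₂ q ^ 2) := by
  have hmeas : Measurable (Function.uncurry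
      fun q r : ℝ × ℝ => ENNReal.ofReal √|q.1 ^ 2 - r.1 ^ 2|) := by
    unfold Function.uncurry
    fun_prop
  simp only [bilinearWeight, weightedConv_add_weight hmeas
    (k₁ := fun q => decay b (modulation q) * k₁ q) (k₂ := fun q => decay b (modulation q) * k₂ q)
    (by fun_prop) (by fun_prop)]
  refine (lintegral_mono fun p => add_sq_le_two_mul _ _).trans ?_
  rw [lintegral_const_mul' _ _ ofNat_ne_top, lintegral_add_left (by fun_prop), bilinearConst,
    mul_assoc, add_mul]
  gcongr
  · exact lintegral_sq_weightedConv_transversal_le hb h₁ h₂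
  · exact lintegral_sq_weightedConv_resonant_le hb h₁ h₂

end Bilinear

lemma one_le_bilinearWeight (x y : ℝ) : 1 ≤ bilinearWeight x y := by
  by_cases h : (x, y) ∈ resonantSet
  · simp [bilinearWeight, resonantInd, h]
  · simp only [resonantSet, Set.mem_ofPred_eq, not_or, not_le] at h
    refine le_add_right (ENNReal.one_le_ofReal.2 (Real.le_sqrt_of_sq_le ?_))
    rw [sq_sub_sq, abs_mul]
    nlinarith [h.1, h.2]

lemma bilinearWeight_comm (x y : ℝ) : bilinearWeight x y = bilinearWeight y x := by
  have hmem : (x, y) ∈ resonantSet ↔ (y, x) ∈ resonantSet := by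
    simp only [resonantSet, Set.mem_ofPred_eq, abs_sub_comm x, add_comm x]
  by_cases h : (x, y) ∈ resonantSet
  · simp only [bilinearWeight, resonantInd, Set.indicator_of_mem h,
      Set.indicator_of_mem (hmem.1 h), abs_sub_comm (x ^ 2)]
  · simp only [bilinearWeight, resonantInd, Set.indicator_of_notMem h,
      Set.indicator_of_notMem (mt hmem.2 h), abs_sub_comm (x ^ 2)]

lemma ofReal_abs_le_bilinearWeight (x y : ℝ) :
    ENNReal.ofReal |x| ≤ 2 * ENNReal.ofReal (1 + |y|) * bilinearWeight x y := by
  by_cases h : |x| ≤ 2 * (1 + |y|)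
  · calc ENNReal.ofReal |x| ≤ ENNReal.ofReal (2 * (1 + |y|)) := ENNReal.ofReal_le_ofReal h
      _ = 2 * ENNReal.ofReal (1 + |y|) := by
          rw [ENNReal.ofReal_mul two_pos.le, ENNReal.ofReal_ofNat]
      _ ≤ _ := le_mul_of_one_le_right' (one_le_bilinearWeight x y)
  · push Not at h
    have hsqrt : |x| / 2 ≤ √|x ^ 2 - y ^ 2| := by
      refine Real.le_sqrt_of_sq_le (le_trans ?_ (le_abs_self _))
      rw [← sq_abs x, ← sq_abs y]
      nlinarith [abs_nonneg x, abs_nonneg y]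
    calc ENNReal.ofReal |x| ≤ ENNReal.ofReal (2 * √|x ^ 2 - y ^ 2|) :=
          ENNReal.ofReal_le_ofReal (by linarith)
      _ = 2 * 1 * ENNReal.ofReal √|x ^ 2 - y ^ 2| := by
          rw [ENNReal.ofReal_mul two_pos.le, ENNReal.ofReal_ofNat, mul_one]
      _ ≤ _ := by
          gcongr
          · exact ENNReal.one_le_ofReal.2 (le_add_of_nonneg_right (abs_nonneg y))
          · exact le_self_add

lemma ofReal_pow_le_one_add_sq (x : ℝ) {n : ℕ} (hn : n ≤ 2) :
    ENNReal.ofReal (|x| ^ n) ≤ ENNReal.ofReal ((1 + |x|) ^ 2) := by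
  refine ENNReal.ofReal_le_ofReal ?_
  calc |x| ^ n ≤ (1 + |x|) ^ n := by
        gcongr
        linarith
    _ ≤ (1 + |x|) ^ 2 := pow_le_pow_right₀ (le_add_of_nonneg_right (abs_nonneg x)) hn

lemma cube_mul_pow_le_bilinearWeight (x y : ℝ) {m : ℕ} (hm : m ≤ 1) :
    ENNReal.ofReal (|x| ^ 3) * ENNReal.ofReal (|y| ^ m) ≤
      2 * (ENNReal.ofReal ((1 + |x|) ^ 2) * ENNReal.ofReal ((1 + |y|) ^ 2)) *
        bilinearWeight x y := by
  have hy : |y| ^ m ≤ 1 + |y| := by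
    interval_cases m <;> simp
  calc ENNReal.ofReal (|x| ^ 3) * ENNReal.ofReal (|y| ^ m)
      = ENNReal.ofReal (|x| ^ 2) * ENNReal.ofReal (|y| ^ m) * ENNReal.ofReal |x| := by
        rw [pow_succ, ENNReal.ofReal_mul (by positivity)]
        ring
    _ ≤ ENNReal.ofReal ((1 + |x|) ^ 2) * ENNReal.ofReal (1 + |y|) *
        (2 * ENNReal.ofReal (1 + |y|) * bilinearWeight x y) := by
        exact mul_le_mul' (mul_le_mul' (ofReal_pow_le_one_add_sq x le_rfl)
          (ENNReal.ofReal_le_ofReal hy)) (ofReal_abs_le_bilinearWeight x y)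
    _ = _ := by
        rw [ENNReal.ofReal_pow (p := 1 + |y|) (by positivity)]
        ring

lemma pow_mul_pow_le_bilinearWeight (x y : ℝ) {n m : ℕ} (hn : n ≤ 3) (hm : m ≤ 3)
    (hnm : n + m ≤ 4) :
    ENNReal.ofReal (|x| ^ n) * ENNReal.ofReal (|y| ^ m) ≤
      2 * (ENNReal.ofReal ((1 + |x|) ^ 2) * ENNReal.ofReal ((1 + |y|) ^ 2)) *
        bilinearWeight x y := by
  obtain rfl | hn := hn.eq_or_lt
  · exact cube_mul_pow_le_bilinearWeight x y (by omega)
  obtain rfl | hm := hm.eq_or_lt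
  · rw [bilinearWeight_comm, mul_comm, mul_comm (ENNReal.ofReal ((1 + |x|) ^ 2))]
    exact cube_mul_pow_le_bilinearWeight y x (by omega)
  calc ENNReal.ofReal (|x| ^ n) * ENNReal.ofReal (|y| ^ m)
      ≤ 1 * (ENNReal.ofReal ((1 + |x|) ^ 2) * ENNReal.ofReal ((1 + |y|) ^ 2)) * 1 := by
        rw [one_mul, mul_one]
        exact mul_le_mul' (ofReal_pow_le_one_add_sq x (by omega))
          (ofReal_pow_le_one_add_sq y (by omega))
    _ ≤ _ := by
        gcongr
        · exact one_le_two
        · exact one_le_bilinearWeight x y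

lemma measurable_angFourierInv {α : Type*} [MeasurableSpace α] {G : α → ℝ → ℂ} {f : α → ℝ}
    (hG : Measurable (Function.uncurry G)) (hf : Measurable f) :
    Measurable fun a => angFourierInv (G a) (f a) := by
  have hexp : Measurable fun w : α × ℝ => cexp (I * (f w.1 : ℂ) * (w.2 : ℂ)) := by fun_prop
  exact (hexp.mul hG).stronglyMeasurable.integral_prod_right'.measurable.const_mul _

/-- The inverse space-time Fourier transform, normalised as `angFourierInv`; the arguments are
`z = (x, t)` on the physical side and `p = (ξ, τ)` on the frequency side. -/
noncomputable def spaceTimeFourierInv (g : ℝ × ℝ → ℂ) (z : ℝ × ℝ) : ℂ :=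
  (1 / (2 * Real.pi) : ℂ) ^ 2 * ∫ p : ℝ × ℝ, cexp (I * (z.1 * p.1 + z.2 * p.2)) * g p

section SpaceTime

variable {g g₁ g₂ : ℝ × ℝ → ℂ}

lemma integrable_cexp_I_mul_add_mul (hg : Integrable g) (z : ℝ × ℝ) :
    Integrable fun p : ℝ × ℝ => cexp (I * (z.1 * p.1 + z.2 * p.2)) * g p := by
  refine hg.bdd_mul (c := 1) (by fun_prop) (.of_forall fun p => le_of_eq ?_)
  rw [← Complex.ofReal_mul, ← Complex.ofReal_mul, ← Complex.ofReal_add, norm_exp_I_mul_ofReal]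

lemma spaceTimeFourierInv_eq (hg : Integrable g) (z : ℝ × ℝ) :
    spaceTimeFourierInv g z =
      angFourierInv (fun ξ => angFourierInv (fun τ => g (ξ, τ)) z.2) z.1 := by
  have h := integrable_cexp_I_mul_add_mul hg z
  simp only [spaceTimeFourierInv, angFourierInv]
  rw [Measure.volume_eq_prod] at h ⊢
  rw [integral_prod _ h, sq, mul_assoc, ← integral_const_mul]
  refine congrArg _ (integral_congr_ae (.of_forall fun ξ => ?_))
  simp only [mul_add, Complex.exp_add, mul_assoc, integral_const_mul]
  ring

lemma measurable_spaceTimeFourierInv (hm : Measurable g) (hg : Integrable g) :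
    Measurable (spaceTimeFourierInv g) := by
  rw [funext (spaceTimeFourierInv_eq hg)]
  have hinner : Measurable fun w : (ℝ × ℝ) × ℝ => angFourierInv (fun τ => g (w.2, τ)) w.1.2 :=
    measurable_angFourierInv (G := fun (w : (ℝ × ℝ) × ℝ) τ => g (w.2, τ)) (by fun_prop)
      (by fun_prop)
  exact measurable_angFourierInv hinner measurable_fst

lemma integrable_angFourierInv_snd (hg : Integrable g) (t : ℝ) :
    Integrable fun ξ => angFourierInv (fun τ => g (ξ, τ)) t := by
  have h := integrable_cexp_I_mul_add_mul hg (0, t)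
  rw [Measure.volume_eq_prod] at h
  refine (h.integral_prod_left.const_mul (1 / (2 * Real.pi) : ℂ)).congr (.of_forall fun ξ => ?_)
  simp only [angFourierInv, Complex.ofReal_zero, zero_mul, zero_add, mul_assoc]

lemma lintegral_enorm_sq_spaceTimeFourierInv_le (hm : Measurable g) (hg : Integrable g) :
    ∫⁻ z, ‖spaceTimeFourierInv g z‖ₑ ^ 2 ≤ ∫⁻ p, ‖g p‖ₑ ^ 2 := by
  have hg' : Integrable g (volume.prod volume) := hg
  have hinner : Measurable fun w : ℝ × ℝ => angFourierInv (fun τ => g (w.1, τ)) w.2 :=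
    measurable_angFourierInv (G := fun (w : ℝ × ℝ) τ => g (w.1, τ)) (by fun_prop) measurable_snd
  calc ∫⁻ z, ‖spaceTimeFourierInv g z‖ₑ ^ 2
      = ∫⁻ t, ∫⁻ x, ‖spaceTimeFourierInv g (x, t)‖ₑ ^ 2 := by
        rw [Measure.volume_eq_prod]
        exact lintegral_prod_symm _
          ((measurable_spaceTimeFourierInv hm hg).enorm.pow_const 2).aemeasurable
    _ ≤ ∫⁻ t, ∫⁻ ξ, ‖angFourierInv (fun τ => g (ξ, τ)) t‖ₑ ^ 2 := by
        refine lintegral_mono fun t => ?_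
        simp only [spaceTimeFourierInv_eq hg]
        exact lintegral_enorm_sq_angFourierInv_le (integrable_angFourierInv_snd hg t)
    _ = ∫⁻ ξ, ∫⁻ t, ‖angFourierInv (fun τ => g (ξ, τ)) t‖ₑ ^ 2 :=
        lintegral_lintegral_swap ((hinner.comp measurable_swap).enorm.pow_const 2).aemeasurable
    _ ≤ ∫⁻ ξ, ∫⁻ τ, ‖g (ξ, τ)‖ₑ ^ 2 := by
        refine lintegral_mono_ae ?_
        filter_upwards [hg'.prod_right_ae] with ξ hξ using lintegral_enorm_sq_angFourierInv_le hξ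
    _ = ∫⁻ p, ‖g p‖ₑ ^ 2 := by
        rw [Measure.volume_eq_prod, lintegral_prod _ (by fun_prop)]

lemma spaceTimeFourierInv_mul (h₁ : Integrable g₁) (h₂ : Integrable g₂) (z : ℝ × ℝ) :
    spaceTimeFourierInv g₁ z * spaceTimeFourierInv g₂ z =
      spaceTimeFourierInv (fun p => (1 / (2 * Real.pi) : ℂ) ^ 2 * ∫ q, g₁ q * g₂ (p - q)) z := by
  have hconv := integral_convolution (ContinuousLinearMap.mul ℂ ℂ)
    (integrable_cexp_I_mul_add_mul h₁ z) (integrable_cexp_I_mul_add_mul h₂ z)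
  simp only [convolution, ContinuousLinearMap.mul_apply'] at hconv
  have hphase (p q : ℝ × ℝ) : cexp (I * (z.1 * p.1 + z.2 * p.2)) * (g₁ q * g₂ (p - q)) =
      cexp (I * (z.1 * q.1 + z.2 * q.2)) * g₁ q *
        (cexp (I * (z.1 * (p - q).1 + z.2 * (p - q).2)) * g₂ (p - q)) := by
    rw [show I * (z.1 * p.1 + z.2 * p.2 : ℂ) = I * (z.1 * q.1 + z.2 * q.2) +
      I * (z.1 * (p - q).1 + z.2 * (p - q).2) by
        simp only [Prod.fst_sub, Prod.snd_sub, Complex.ofReal_sub]; ring, Complex.exp_add]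
    ring
  simp only [spaceTimeFourierInv, mul_left_comm (cexp _), integral_const_mul]
  simp only [← integral_const_mul (cexp _), hphase, hconv]
  ring

lemma lintegral_enorm_sq_spaceTimeFourierInv_mul_le (hm₁ : Measurable g₁) (hm₂ : Measurable g₂)
    (h₁ : Integrable g₁) (h₂ : Integrable g₂) :
    ∫⁻ z, ‖spaceTimeFourierInv g₁ z * spaceTimeFourierInv g₂ z‖ₑ ^ 2 ≤
      ∫⁻ p, (∫⁻ q, ‖g₁ q‖ₑ * ‖g₂ (p - q)‖ₑ) ^ 2 := by
  have hint : Integrable fun p => ∫ q, g₁ q * g₂ (p - q) :=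
    h₁.integrable_convolution (ContinuousLinearMap.mul ℂ ℂ) h₂
  have hmeas : Measurable fun p => ∫ q, g₁ q * g₂ (p - q) := by
    have : Measurable fun w : (ℝ × ℝ) × (ℝ × ℝ) => g₁ w.2 * g₂ (w.1 - w.2) := by fun_prop
    exact this.stronglyMeasurable.integral_prod_right'.measurable
  have hpi : ‖(1 / (2 * Real.pi) : ℂ) ^ 2‖ₑ ≤ 1 := by
    rw [← ofReal_norm, norm_pow]
    exact ENNReal.ofReal_le_one.2 (pow_le_one₀ (norm_nonneg _) norm_one_div_two_pi_le_one)
  simp only [spaceTimeFourierInv_mul h₁ h₂]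
  refine (lintegral_enorm_sq_spaceTimeFourierInv_le (hmeas.const_mul _)
    (hint.const_mul _)).trans (lintegral_mono fun p => pow_le_pow_left' ?_ 2)
  rw [enorm_mul]
  refine (mul_le_of_le_one_left zero_le hpi).trans
    ((enorm_integral_le_lintegral_enorm _).trans_eq ?_)
  simp only [enorm_mul]

end SpaceTime

lemma tendsto_angFourierInv_indicator_Icc {g : ℝ → ℂ} (hg : Integrable g) (x : ℝ) :
    Tendsto (fun n : ℕ => angFourierInv ((Set.Icc (-(n : ℝ)) n).indicator g) x) atTop
      (𝓝 (angFourierInv g x)) := by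
  refine Tendsto.const_mul _ (tendsto_integral_of_dominated_convergence (fun ξ => ‖g ξ‖)
    (fun n => (integrable_cexp_I_mul (hg.indicator measurableSet_Icc) x).1) hg.norm
    (fun n => .of_forall fun ξ => ?_) (.of_forall fun ξ => ?_))
  · rw [norm_mul, norm_cexp_I_mul_mul, one_mul]
    exact norm_indicator_le_norm_self _ _
  · refine tendsto_const_nhds.congr' ?_
    filter_upwards [eventually_ge_atTop ⌈|ξ|⌉₊] with n hn
    have hmem : ξ ∈ Set.Icc (-(n : ℝ)) n := abs_le.1 (Nat.ceil_le.1 hn)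
    rw [Set.indicator_of_mem hmem]

lemma lintegral_enorm_sq_le_of_tendsto {α E : Type*} [MeasurableSpace α] {ν : Measure α}
    [NormedAddCommGroup E] [MeasurableSpace E] [OpensMeasurableSpace E] {f : ℕ → α → E} {g : α → E}
    {K : ℝ≥0∞} (hf : ∀ n, Measurable (f n)) (hK : ∀ n, ∫⁻ a, ‖f n a‖ₑ ^ 2 ∂ν ≤ K)
    (hlim : ∀ᵐ a ∂ν, Tendsto (fun n => f n a) atTop (𝓝 (g a))) :
    ∫⁻ a, ‖g a‖ₑ ^ 2 ∂ν ≤ K := by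
  calc ∫⁻ a, ‖g a‖ₑ ^ 2 ∂ν = ∫⁻ a, liminf (fun n => ‖f n a‖ₑ ^ 2) atTop ∂ν := by
        refine lintegral_congr_ae ?_
        filter_upwards [hlim] with a ha
        exact (((ENNReal.continuous_pow 2).tendsto _).comp ha.enorm).liminf_eq.symm
    _ ≤ liminf (fun n => ∫⁻ a, ‖f n a‖ₑ ^ 2 ∂ν) atTop :=
        lintegral_liminf_le fun n => (hf n).enorm.pow_const 2
    _ ≤ K := by
        exact (liminf_le_liminf (Eventually.of_forall hK)).trans_eq (liminf_const (f := atTop) K)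

/-- The symbol `κ` of a Fourier multiplier has order at most `o` relative to the exponential
weight `cosh (σ ξ)`, with constant `c`. -/
structure IsSymbol (σ : ℝ) (o : ℕ) (c : ℝ) (κ : ℝ → ℂ) : Prop where
  measurable : Measurable κ
  norm_le : ∀ ξ, ‖κ ξ‖ ≤ c * |ξ| ^ o * Real.cosh (σ * ξ)

lemma IsSymbol.nonneg {σ c : ℝ} {o : ℕ} {κ : ℝ → ℂ} (h : IsSymbol σ o c κ) : 0 ≤ c := by
  have h1 := (norm_nonneg _).trans (h.norm_le 1)
  simp only [abs_one, one_pow, mul_one] at h1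
  exact nonneg_of_mul_nonneg_left h1 (Real.cosh_pos σ)

lemma measurable_cosh_mul (σ : ℝ) : Measurable fun ξ : ℝ => Real.cosh (σ * ξ) :=
  (Real.continuous_cosh.comp (continuous_const_mul σ)).measurable

/-- The square root of the density of the Bourgain norm with hyperbolic cosine weight,
as a function of the space-time Fourier transform `V`. -/
noncomputable def bourgainDensity (b σ : ℝ) (V : ℝ × ℝ → ℂ) (p : ℝ × ℝ) : ℝ≥0∞ :=
  ENNReal.ofReal ((1 + |p.1|) ^ 2 * Real.cosh (σ * p.1) * (1 + |modulation p|) ^ b) * ‖V p‖ₑ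

/-- The square of the Bourgain norm `X^{σ,2,b}` of the function with space-time Fourier
transform `V`. -/
noncomputable def bourgainNormSq (b σ : ℝ) (V : ℝ × ℝ → ℂ) : ℝ≥0∞ :=
  ∫⁻ p, bourgainDensity b σ V p ^ 2

/-- The constant of the embedding of the Bourgain space into the functions with one derivative
in the Wiener algebra. -/
noncomputable def sobolevConst (b : ℝ) : ℝ≥0∞ := decayMass 2 * decayMass (2 * b)

lemma sobolevConst_lt_top {b : ℝ} (hb : 1 / 2 < b) : sobolevConst b < ∞ :=
  ENNReal.mul_lt_top (decayMass_lt_top one_lt_two) (decayMass_lt_top (by linarith))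

section Bourgain

variable {b σ R c d : ℝ} {o r : ℕ} {κ χ : ℝ → ℂ} {V : ℝ × ℝ → ℂ}

@[fun_prop]
lemma measurable_bourgainDensity (hV : Measurable V) : Measurable (bourgainDensity b σ V) := by
  have : Measurable fun p : ℝ × ℝ => Real.cosh (σ * p.1) :=
    (measurable_cosh_mul σ).comp measurable_fst
  unfold bourgainDensity
  fun_prop

lemma weight_mul_enorm_eq_decay_mul_bourgainDensity (b σ : ℝ) (V : ℝ × ℝ → ℂ) (p : ℝ × ℝ) :
    ENNReal.ofReal ((1 + |p.1|) ^ 2) * ENNReal.ofReal (Real.cosh (σ * p.1)) * ‖V p‖ₑ =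
      decay b (modulation p) * bourgainDensity b σ V p := by
  have : 0 < Real.cosh (σ * p.1) := Real.cosh_pos _
  have hcancel : (1 + |modulation p|) ^ (-b) * (1 + |modulation p|) ^ b = 1 := by
    rw [← Real.rpow_add (by positivity), neg_add_cancel, Real.rpow_zero]
  rw [decay, bourgainDensity, ← mul_assoc, ← ENNReal.ofReal_mul (by positivity),
    ← ENNReal.ofReal_mul (by positivity), mul_left_comm ((1 + |modulation p|) ^ (-b)), hcancel,
    mul_one]

lemma sq_lintegral_weight_mul_enorm_le (hV : Measurable V) :
    (∫⁻ p, ENNReal.ofReal (1 + |p.1|) * ENNReal.ofReal (Real.cosh (σ * p.1)) * ‖V p‖ₑ) ^ 2 ≤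
      sobolevConst b * bourgainNormSq b σ V := by
  have hsplit (p : ℝ × ℝ) :
      ENNReal.ofReal (1 + |p.1|) * ENNReal.ofReal (Real.cosh (σ * p.1)) * ‖V p‖ₑ =
        decay 1 p.1 * decay b (modulation p) * bourgainDensity b σ V p := by
    have hcancel : ENNReal.ofReal (1 + |p.1|) =
        decay 1 p.1 * ENNReal.ofReal ((1 + |p.1|) ^ 2) := by
      rw [decay, ← ENNReal.ofReal_mul (by positivity), Real.rpow_neg_one, sq,
        inv_mul_cancel_left₀ (by positivity)]
    rw [mul_assoc (decay 1 p.1), ← weight_mul_enorm_eq_decay_mul_bourgainDensity, hcancel]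
    ring
  have hmass : ∫⁻ p : ℝ × ℝ, (decay 1 p.1 * decay b (modulation p)) ^ 2 = sobolevConst b := by
    rw [Measure.volume_eq_prod, lintegral_prod _ (by fun_prop)]
    simp only [mul_pow, decay_sq, modulation, mul_one]
    simp_rw [lintegral_const_mul' _ _ (show decay 2 _ ≠ ∞ from ENNReal.ofReal_ne_top),
      lintegral_decay_sub_right]
    exact lintegral_mul_const _ (measurable_decay 2)
  simp_rw [hsplit]
  refine (sq_lintegral_mul_le (by fun_prop) (by fun_prop)).trans_eq ?_
  rw [hmass, bourgainNormSq]

lemma lintegral_weight_mul_enorm_lt_top (hb : 1 / 2 < b) (hV : Measurable V)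
    (hfin : bourgainNormSq b σ V < ∞) :
    ∫⁻ p, ENNReal.ofReal (1 + |p.1|) * ENNReal.ofReal (Real.cosh (σ * p.1)) * ‖V p‖ₑ < ∞ := by
  have h := (sq_lintegral_weight_mul_enorm_le (b := b) hV).trans_lt
    (ENNReal.mul_lt_top (sobolevConst_lt_top hb) hfin)
  exact (ENNReal.pow_lt_top_iff.1 h).resolve_right two_ne_zero

/-- The multiplier `κ` applied on the Fourier side and cut off to the frequencies `|ξ| ≤ R`. -/
noncomputable def truncMul (R : ℝ) (κ : ℝ → ℂ) (V : ℝ × ℝ → ℂ) (p : ℝ × ℝ) : ℂ :=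
  (Set.Icc (-R) R).indicator κ p.1 * V p

lemma measurable_truncMul (hκ : Measurable κ) (hV : Measurable V) :
    Measurable (truncMul R κ V) :=
  ((hκ.indicator measurableSet_Icc).comp measurable_fst).mul hV

lemma enorm_truncMul_le (hκ : IsSymbol σ o c κ) (p : ℝ × ℝ) :
    ‖truncMul R κ V p‖ₑ ≤ ENNReal.ofReal c * ENNReal.ofReal (|p.1| ^ o) *
      (ENNReal.ofReal (Real.cosh (σ * p.1)) * ‖V p‖ₑ) := by
  have hc := hκ.nonneg
  rw [truncMul, enorm_mul, ← mul_assoc]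
  refine mul_le_mul' ((enorm_indicator_le_enorm_self _ _).trans ?_) le_rfl
  rw [← ofReal_norm, ← ENNReal.ofReal_mul hc, ← ENNReal.ofReal_mul (by positivity)]
  exact ENNReal.ofReal_le_ofReal (hκ.norm_le _)

lemma integrable_truncMul (hb : 1 / 2 < b) (hκ : IsSymbol σ o c κ) (hV : Measurable V)
    (hfin : bourgainNormSq b σ V < ∞) : Integrable (truncMul R κ V) := by
  have hbound (p : ℝ × ℝ) : ‖truncMul R κ V p‖ₑ ≤ ENNReal.ofReal c * ENNReal.ofReal (|R| ^ o) *
      (ENNReal.ofReal (1 + |p.1|) * ENNReal.ofReal (Real.cosh (σ * p.1)) * ‖V p‖ₑ) := by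
    by_cases hp : p.1 ∈ Set.Icc (-R) R
    · refine (enorm_truncMul_le hκ p).trans ?_
      have hR : |p.1| ≤ |R| := (abs_le.2 hp).trans (le_abs_self R)
      rw [mul_assoc (ENNReal.ofReal (1 + |p.1|))]
      exact mul_le_mul' (by gcongr) (le_mul_of_one_le_left' (ENNReal.one_le_ofReal.2
        (le_add_of_nonneg_right (abs_nonneg _))))
    · simp [truncMul, hp]
  refine ⟨(measurable_truncMul hκ.measurable hV).aestronglyMeasurable,
    (lintegral_mono hbound).trans_lt ?_⟩
  rw [lintegral_const_mul' _ _ (by finiteness)]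
  exact ENNReal.mul_lt_top (by finiteness) (lintegral_weight_mul_enorm_lt_top hb hV hfin)

lemma enorm_truncMul_mul_enorm_truncMul_le (hκ : IsSymbol σ o c κ) (hχ : IsSymbol σ r d χ)
    (ho : o ≤ 3) (hr : r ≤ 3) (hor : o + r ≤ 4) (p q : ℝ × ℝ) :
    ‖truncMul R κ V p‖ₑ * ‖truncMul R χ V q‖ₑ ≤ 2 * ENNReal.ofReal (c * d) *
      (bilinearWeight p.1 q.1 * (decay b (modulation p) * bourgainDensity b σ V p *
        (decay b (modulation q) * bourgainDensity b σ V q))) := by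
  calc _ ≤ ENNReal.ofReal c * ENNReal.ofReal (|p.1| ^ o) *
        (ENNReal.ofReal (Real.cosh (σ * p.1)) * ‖V p‖ₑ) *
        (ENNReal.ofReal d * ENNReal.ofReal (|q.1| ^ r) *
          (ENNReal.ofReal (Real.cosh (σ * q.1)) * ‖V q‖ₑ)) :=
        mul_le_mul' (enorm_truncMul_le hκ p) (enorm_truncMul_le hχ q)
    _ = ENNReal.ofReal (|p.1| ^ o) * ENNReal.ofReal (|q.1| ^ r) * (ENNReal.ofReal (c * d) *
        ((ENNReal.ofReal (Real.cosh (σ * p.1)) * ‖V p‖ₑ) *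
          (ENNReal.ofReal (Real.cosh (σ * q.1)) * ‖V q‖ₑ))) := by
        rw [ENNReal.ofReal_mul hκ.nonneg]
        ring
    _ ≤ _ := mul_le_mul' (pow_mul_pow_le_bilinearWeight p.1 q.1 ho hr hor) le_rfl
    _ = _ := by
        rw [← weight_mul_enorm_eq_decay_mul_bourgainDensity,
          ← weight_mul_enorm_eq_decay_mul_bourgainDensity]
        ring

lemma lintegral_enorm_sq_truncMul_mul_truncMul_le (hb : 1 / 2 < b) (hκ : IsSymbol σ o c κ)
    (hχ : IsSymbol σ r d χ) (ho : o ≤ 3) (hr : r ≤ 3) (hor : o + r ≤ 4) (hV : Measurable V)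
    (hfin : bourgainNormSq b σ V < ∞) :
    ∫⁻ z, ‖spaceTimeFourierInv (truncMul R κ V) z * spaceTimeFourierInv (truncMul R χ V) z‖ₑ ^ 2 ≤
      4 * bilinearConst b * (ENNReal.ofReal (c * d) * bourgainNormSq b σ V) ^ 2 := by
  calc _ ≤ ∫⁻ p, (∫⁻ q, ‖truncMul R κ V q‖ₑ * ‖truncMul R χ V (p - q)‖ₑ) ^ 2 :=
        lintegral_enorm_sq_spaceTimeFourierInv_mul_le (measurable_truncMul hκ.measurable hV)
          (measurable_truncMul hχ.measurable hV) (integrable_truncMul hb hκ hV hfin)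
          (integrable_truncMul hb hχ hV hfin)
    _ ≤ ∫⁻ p, (2 * ENNReal.ofReal (c * d)) ^ 2 *
        weightedConv (fun q r : ℝ × ℝ => bilinearWeight q.1 r.1)
          (fun q => decay b (modulation q) * bourgainDensity b σ V q)
          (fun q => decay b (modulation q) * bourgainDensity b σ V q) p ^ 2 := by
        refine lintegral_mono fun p => ?_
        rw [← mul_pow, weightedConv, ← lintegral_const_mul' _ _ (by finiteness)]
        exact pow_le_pow_left' (lintegral_mono fun q =>
          enorm_truncMul_mul_enorm_truncMul_le hκ hχ ho hr hor q (p - q)) 2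
    _ ≤ (2 * ENNReal.ofReal (c * d)) ^ 2 *
        (bilinearConst b * (bourgainNormSq b σ V * bourgainNormSq b σ V)) := by
        rw [lintegral_const_mul' _ _ (by finiteness)]
        gcongr
        exact lintegral_sq_weightedConv_bilinearWeight_le (by linarith) (by fun_prop) (by fun_prop)
    _ = _ := by ring

lemma tendsto_spaceTimeFourierInv_truncMul (hb : 1 / 2 < b) (hκ : IsSymbol σ o c κ)
    (hV : Measurable V) (hfin : bourgainNormSq b σ V < ∞) {t : ℝ} {h : ℝ → ℂ}
    (hh : ∀ᵐ ξ, angFourierInv (fun τ => V (ξ, τ)) t = h ξ) (hi : Integrable fun ξ => κ ξ * h ξ)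
    (x : ℝ) :
    Tendsto (fun n : ℕ => spaceTimeFourierInv (truncMul n κ V) (x, t)) atTop
      (𝓝 (angFourierInv (fun ξ => κ ξ * h ξ) x)) := by
  refine (tendsto_angFourierInv_indicator_Icc hi x).congr fun n => ?_
  rw [spaceTimeFourierInv_eq (integrable_truncMul hb hκ hV hfin)]
  refine congrArg _ (integral_congr_ae ?_)
  filter_upwards [hh] with ξ hξ
  simp only [truncMul, angFourierInv_const_mul, hξ, Set.indicator_mul_left]

lemma lintegral_sq_angFourierInv_mul_le (hb : 1 / 2 < b) (hκ : IsSymbol σ o c κ)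
    (hχ : IsSymbol σ r d χ) (ho : o ≤ 3) (hr : r ≤ 3) (hor : o + r ≤ 4) (hV : Measurable V)
    (hfin : bourgainNormSq b σ V < ∞) {s : Set ℝ} (hs : MeasurableSet s) {h : ℝ → ℝ → ℂ}
    (hh : ∀ t ∈ s, ∀ᵐ ξ, angFourierInv (fun τ => V (ξ, τ)) t = h t ξ)
    (hiκ : ∀ t ∈ s, Integrable fun ξ => κ ξ * h t ξ)
    (hiχ : ∀ t ∈ s, Integrable fun ξ => χ ξ * h t ξ) :
    ∫⁻ z in Set.univ ×ˢ s, ‖angFourierInv (fun ξ => κ ξ * h z.2 ξ) z.1 *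
        angFourierInv (fun ξ => χ ξ * h z.2 ξ) z.1‖ₑ ^ 2 ≤
      4 * bilinearConst b * (ENNReal.ofReal (c * d) * bourgainNormSq b σ V) ^ 2 := by
  refine lintegral_enorm_sq_le_of_tendsto
    (f := fun n : ℕ => spaceTimeFourierInv (truncMul n κ V) * spaceTimeFourierInv (truncMul n χ V))
    (fun n => ?_) (fun n => (setLIntegral_le_lintegral _ _).trans
      (lintegral_enorm_sq_truncMul_mul_truncMul_le hb hκ hχ ho hr hor hV hfin)) ?_
  · exact (measurable_spaceTimeFourierInv (measurable_truncMul hκ.measurable hV)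
      (integrable_truncMul hb hκ hV hfin)).mul (measurable_spaceTimeFourierInv
      (measurable_truncMul hχ.measurable hV) (integrable_truncMul hb hχ hV hfin))
  · filter_upwards [ae_restrict_mem (MeasurableSet.univ.prod hs)] with z hz
    exact (tendsto_spaceTimeFourierInv_truncMul hb hκ hV hfin (hh _ hz.2) (hiκ _ hz.2) z.1).mul
      (tendsto_spaceTimeFourierInv_truncMul hb hχ hV hfin (hh _ hz.2) (hiχ _ hz.2) z.1)

lemma sq_lintegral_weight_mul_enorm_slice_le (hV : Measurable V) {t : ℝ} {h : ℝ → ℂ}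
    (hh : ∀ᵐ ξ, angFourierInv (fun τ => V (ξ, τ)) t = h ξ) :
    (∫⁻ ξ, ENNReal.ofReal (1 + |ξ|) * ENNReal.ofReal (Real.cosh (σ * ξ)) * ‖h ξ‖ₑ) ^ 2 ≤
      sobolevConst b * bourgainNormSq b σ V := by
  refine (pow_le_pow_left' ?_ 2).trans (sq_lintegral_weight_mul_enorm_le hV)
  have : Measurable fun p : ℝ × ℝ => Real.cosh (σ * p.1) :=
    (measurable_cosh_mul σ).comp measurable_fst
  rw [Measure.volume_eq_prod, lintegral_prod _ (by fun_prop)]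
  refine lintegral_mono_ae ?_
  filter_upwards [hh] with ξ hξ
  rw [lintegral_const_mul' _ _ (by finiteness), ← hξ]
  gcongr
  exact enorm_angFourierInv_le _ t

end Bourgain

/-- The space derivative `∂ₓF` of a function of `(x, t)`. -/
noncomputable def partialX (F : ℝ × ℝ → ℝ) (z : ℝ × ℝ) : ℝ := fderiv ℝ F z (1, 0)

/-- The time derivative `∂ₜF` of a function of `(x, t)`. -/
noncomputable def partialT (F : ℝ × ℝ → ℝ) (z : ℝ × ℝ) : ℝ := fderiv ℝ F z (0, 1)

/-- Smooth functions of `(x, t)` all of whose derivatives decay rapidly in `x`, uniformly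
for `t ∈ [-T, T]`. -/
structure IsSchwartzOnStrip (T : ℝ) (F : ℝ × ℝ → ℝ) : Prop where
  contDiff : ContDiff ℝ (⊤ : ℕ∞) F
  decay : ∀ k n : ℕ, ∃ D : ℝ, ∀ x t : ℝ, t ∈ Set.Icc (-T) T →
    (1 + |x|) ^ k * ‖iteratedFDeriv ℝ n F (x, t)‖ ≤ D

lemma isSchwartzOnStrip_schwartzMap (T : ℝ) (v : SchwartzMap (ℝ × ℝ) ℝ) :
    IsSchwartzOnStrip T v := by
  refine ⟨v.smooth _, fun k n => ⟨_, fun x t _ => le_trans ?_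
    (SchwartzMap.one_add_le_sup_seminorm_apply (𝕜 := ℝ) (m := (k, n)) le_rfl le_rfl v (x, t))⟩⟩
  gcongr
  exact le_max_left _ _

namespace IsSchwartzOnStrip

variable {T t : ℝ} {F G : ℝ × ℝ → ℝ}

lemma continuous (hF : IsSchwartzOnStrip T F) : Continuous F := hF.contDiff.continuous

lemma differentiable (hF : IsSchwartzOnStrip T F) : Differentiable ℝ F :=
  hF.contDiff.differentiable (by simp)

lemma add (hF : IsSchwartzOnStrip T F) (hG : IsSchwartzOnStrip T G) :
    IsSchwartzOnStrip T fun z => F z + G z := by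
  refine ⟨hF.contDiff.add hG.contDiff, fun k n => ?_⟩
  obtain ⟨D, hD⟩ := hF.decay k n
  obtain ⟨E, hE⟩ := hG.decay k n
  refine ⟨D + E, fun x t ht => ?_⟩
  have hsum : iteratedFDeriv ℝ n (fun z => F z + G z) (x, t) =
      iteratedFDeriv ℝ n F (x, t) + iteratedFDeriv ℝ n G (x, t) :=
    iteratedFDeriv_add_apply (hF.contDiff.contDiffAt.of_le (by exact_mod_cast le_top))
      (hG.contDiff.contDiffAt.of_le (by exact_mod_cast le_top))
  calc (1 + |x|) ^ k * ‖iteratedFDeriv ℝ n (fun z => F z + G z) (x, t)‖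
      ≤ (1 + |x|) ^ k * (‖iteratedFDeriv ℝ n F (x, t)‖ + ‖iteratedFDeriv ℝ n G (x, t)‖) := by
        rw [hsum]
        gcongr
        exact norm_add_le _ _
    _ ≤ D + E := by
        rw [mul_add]
        exact add_le_add (hD x t ht) (hE x t ht)

lemma mul (hF : IsSchwartzOnStrip T F) (hG : IsSchwartzOnStrip T G) :
    IsSchwartzOnStrip T fun z => F z * G z := by
  refine ⟨hF.contDiff.mul hG.contDiff, fun k n => ?_⟩
  choose D hD using fun i => hF.decay k i
  choose E hE using fun i => hG.decay 0 i
  refine ⟨∑ i ∈ Finset.range (n + 1), n.choose i * D i * E (n - i), fun x t ht => ?_⟩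
  calc (1 + |x|) ^ k * ‖iteratedFDeriv ℝ n (fun z => F z * G z) (x, t)‖
      ≤ (1 + |x|) ^ k * ∑ i ∈ Finset.range (n + 1), n.choose i *
          ‖iteratedFDeriv ℝ i F (x, t)‖ * ‖iteratedFDeriv ℝ (n - i) G (x, t)‖ := by
        gcongr
        exact norm_iteratedFDeriv_mul_le hF.contDiff hG.contDiff _ (by exact_mod_cast le_top)
    _ = ∑ i ∈ Finset.range (n + 1), n.choose i *
          ((1 + |x|) ^ k * ‖iteratedFDeriv ℝ i F (x, t)‖) *
          ((1 + |x|) ^ 0 * ‖iteratedFDeriv ℝ (n - i) G (x, t)‖) := by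
        rw [Finset.mul_sum]
        refine Finset.sum_congr rfl fun i _ => ?_
        ring
    _ ≤ ∑ i ∈ Finset.range (n + 1), n.choose i * D i * E (n - i) := by
        refine Finset.sum_le_sum fun i _ => ?_
        have hDi := hD i x t ht
        have : 0 ≤ D i := le_trans (by positivity) hDi
        gcongr
        exact hE (n - i) x t ht

lemma const_mul (c : ℝ) (hF : IsSchwartzOnStrip T F) : IsSchwartzOnStrip T fun z => c * F z := by
  refine ⟨contDiff_const.mul hF.contDiff, fun k n => ?_⟩
  obtain ⟨D, hD⟩ := hF.decay k n
  refine ⟨‖c‖ * D, fun x t ht => ?_⟩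
  have hsmul : iteratedFDeriv ℝ n (c • F) (x, t) = c • iteratedFDeriv ℝ n F (x, t) :=
    iteratedFDeriv_const_smul_apply (hF.contDiff.contDiffAt.of_le (by exact_mod_cast le_top))
  change (1 + |x|) ^ k * ‖iteratedFDeriv ℝ n (c • F) (x, t)‖ ≤ ‖c‖ * D
  rw [hsmul, norm_smul, mul_left_comm]
  exact mul_le_mul_of_nonneg_left (hD x t ht) (norm_nonneg c)

lemma sub (hF : IsSchwartzOnStrip T F) (hG : IsSchwartzOnStrip T G) :
    IsSchwartzOnStrip T fun z => F z - G z := by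
  simpa only [neg_one_mul, ← sub_eq_add_neg] using hF.add (hG.const_mul (-1))

lemma pow_succ (hF : IsSchwartzOnStrip T F) (n : ℕ) :
    IsSchwartzOnStrip T fun z => F z ^ (n + 1) := by
  induction n with
  | zero => simpa using hF
  | succ n ih => simpa only [_root_.pow_succ _ (n + 1)] using ih.mul hF

lemma fderiv_apply (hF : IsSchwartzOnStrip T F) (e : ℝ × ℝ) :
    IsSchwartzOnStrip T fun z => fderiv ℝ F z e := by
  have hd : ContDiff ℝ (⊤ : ℕ∞) (fderiv ℝ F) := hF.contDiff.fderiv_right le_rfl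
  set L := ContinuousLinearMap.apply ℝ ℝ e
  refine ⟨L.contDiff.comp hd, fun k n => ?_⟩
  obtain ⟨D, hD⟩ := hF.decay k (n + 1)
  refine ⟨‖L‖ * D, fun x t ht => ?_⟩
  calc (1 + |x|) ^ k * ‖iteratedFDeriv ℝ n (L ∘ fderiv ℝ F) (x, t)‖
      ≤ (1 + |x|) ^ k * (‖L‖ * ‖iteratedFDeriv ℝ (n + 1) F (x, t)‖) := by
        rw [← norm_iteratedFDeriv_fderiv]
        gcongr
        exact L.norm_iteratedFDeriv_comp_left hd.contDiffAt (by exact_mod_cast le_top)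
    _ = ‖L‖ * ((1 + |x|) ^ k * ‖iteratedFDeriv ℝ (n + 1) F (x, t)‖) := by ring
    _ ≤ ‖L‖ * D := by
        gcongr
        exact hD x t ht

lemma partialX (hF : IsSchwartzOnStrip T F) : IsSchwartzOnStrip T (partialX F) :=
  hF.fderiv_apply (1, 0)

lemma partialT (hF : IsSchwartzOnStrip T F) : IsSchwartzOnStrip T (partialT F) :=
  hF.fderiv_apply (0, 1)

lemma iterate_partialX (hF : IsSchwartzOnStrip T F) (n : ℕ) :
    IsSchwartzOnStrip T (MKdV.partialX^[n] F) := by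
  induction n generalizing F with
  | zero => exact hF
  | succ _ ih => exact ih hF.partialX

lemma hasDerivAt_partialX (hF : IsSchwartzOnStrip T F) (x t : ℝ) :
    HasDerivAt (fun y => F (y, t)) (MKdV.partialX F (x, t)) x :=
  (hF.differentiable (x, t)).hasFDerivAt.comp_hasDerivAt x
    ((hasDerivAt_id x).prodMk (hasDerivAt_const x t))

lemma hasDerivAt_partialT (hF : IsSchwartzOnStrip T F) (x t : ℝ) :
    HasDerivAt (fun s => F (x, s)) (MKdV.partialT F (x, t)) t :=
  (hF.differentiable (x, t)).hasFDerivAt.comp_hasDerivAt t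
    ((hasDerivAt_const t x).prodMk (hasDerivAt_id t))

lemma partialX_partialT (hF : IsSchwartzOnStrip T F) :
    MKdV.partialX (MKdV.partialT F) = MKdV.partialT (MKdV.partialX F) := by
  ext z
  have hsymm : IsSymmSndFDerivAt ℝ F z := by
    refine hF.contDiff.contDiffAt.isSymmSndFDerivAt ?_
    rw [minSmoothness_of_isRCLikeNormedField]
    exact WithTop.coe_le_coe.2 (le_top : (2 : ℕ∞) ≤ ⊤)
  have hd : DifferentiableAt ℝ (fderiv ℝ F) z :=
    (hF.contDiff.fderiv_right (m := (⊤ : ℕ∞)) le_rfl).differentiable (by simp) z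
  have hsnd (e e' : ℝ × ℝ) :
      fderiv ℝ (fun w => fderiv ℝ F w e) z e' = fderiv ℝ (fderiv ℝ F) z e' e := by
    simp [(hd.hasFDerivAt.clm_apply (hasFDerivAt_const e z)).fderiv]
  exact (hsnd _ _).trans ((hsymm _ _).trans (hsnd _ _).symm)

lemma exists_abs_le (hF : IsSchwartzOnStrip T F) :
    ∃ D : ℝ, ∀ x t : ℝ, t ∈ Set.Icc (-T) T → |F (x, t)| ≤ D * (1 + x ^ 2)⁻¹ := by
  obtain ⟨D, hD⟩ := hF.decay 2 0
  refine ⟨D, fun x t ht => ?_⟩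
  have h := hD x t ht
  rw [norm_iteratedFDeriv_zero, Real.norm_eq_abs] at h
  rw [← div_eq_mul_inv, le_div_iff₀' (by positivity)]
  refine le_trans ?_ h
  gcongr
  nlinarith [abs_nonneg x, sq_abs x]

lemma integrable (hF : IsSchwartzOnStrip T F) (ht : t ∈ Set.Icc (-T) T) :
    Integrable fun x => F (x, t) := by
  obtain ⟨D, hD⟩ := hF.exists_abs_le
  have := hF.continuous
  exact (integrable_inv_one_add_sq.const_mul D).mono'
    (Continuous.aestronglyMeasurable (by fun_prop)) (.of_forall fun x => hD x t ht)

lemma continuousOn_integral (hF : IsSchwartzOnStrip T F) :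
    ContinuousOn (fun t => ∫ x, F (x, t)) (Set.Icc (-T) T) := by
  obtain ⟨D, hD⟩ := hF.exists_abs_le
  have := hF.continuous
  exact continuousOn_of_dominated (fun t _ => Continuous.aestronglyMeasurable (by fun_prop))
    (fun t ht => .of_forall fun x => hD x t ht) (integrable_inv_one_add_sq.const_mul D)
    (.of_forall fun x => Continuous.continuousOn (by fun_prop))

lemma hasDerivAt_integral_mul (hF : IsSchwartzOnStrip T F) (ht : t ∈ Set.Ioo (-T) T) {φ : ℝ → ℂ}
    (hφ : Continuous φ) (hbound : ∀ x, ‖φ x‖ ≤ 1) :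
    HasDerivAt (fun s => ∫ x, φ x * F (x, s)) (∫ x, φ x * MKdV.partialT F (x, t)) t := by
  obtain ⟨D, hD⟩ := hF.partialT.exists_abs_le
  have := hF.continuous
  have := hF.partialT.continuous
  refine (hasDerivAt_integral_of_dominated_loc_of_deriv_le (Ioo_mem_nhds ht.1 ht.2)
    (.of_forall fun s => Continuous.aestronglyMeasurable (by fun_prop))
    ((hF.integrable (Set.Ioo_subset_Icc_self ht)).ofReal.bdd_mul
      hφ.aestronglyMeasurable (.of_forall hbound))
    (Continuous.aestronglyMeasurable (by fun_prop))
    (.of_forall fun x s hs => ?_) (integrable_inv_one_add_sq.const_mul D)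
    (.of_forall fun x s _ => (hF.hasDerivAt_partialT x s).ofReal_comp.const_mul (φ x))).2
  rw [norm_mul, Complex.norm_real]
  exact (mul_le_of_le_one_left (norm_nonneg _) (hbound x)).trans
    (hD x s (Set.Ioo_subset_Icc_self hs))

lemma hasDerivAt_integral (hF : IsSchwartzOnStrip T F) (ht : t ∈ Set.Ioo (-T) T) :
    HasDerivAt (fun s => ∫ x, F (x, s)) (∫ x, MKdV.partialT F (x, t)) t := by
  have h := hF.hasDerivAt_integral_mul ht continuous_const fun _ => norm_one.le
  simp only [one_mul, integral_complex_ofReal] at h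
  simpa only [Function.comp_def, reCLM_apply, ofReal_re] using
    reCLM.hasFDerivAt.comp_hasDerivAt t h

lemma integral_partialX (hF : IsSchwartzOnStrip T F) (ht : t ∈ Set.Icc (-T) T) :
    ∫ x, MKdV.partialX F (x, t) = 0 :=
  integral_eq_zero_of_hasDerivAt_of_integrable (fun x => hF.hasDerivAt_partialX x t)
    (hF.partialX.integrable ht) (hF.integrable ht)

end IsSchwartzOnStrip

/-- The spatial Fourier transform `𝓕ₓF(ξ, t)` at a fixed time. -/
noncomputable def spatialFourier (F : ℝ × ℝ → ℝ) (t ξ : ℝ) : ℂ :=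
  angFourier (fun y => (F (y, t) : ℂ)) ξ

namespace IsSchwartzOnStrip

variable {T t : ℝ} {F : ℝ × ℝ → ℝ}

lemma continuous_spatialFourier (hF : IsSchwartzOnStrip T F) (ht : t ∈ Set.Icc (-T) T) :
    Continuous (spatialFourier F t) :=
  continuous_angFourier (hF.integrable ht).ofReal

lemma spatialFourier_partialX (hF : IsSchwartzOnStrip T F) (ht : t ∈ Set.Icc (-T) T) (ξ : ℝ) :
    spatialFourier (MKdV.partialX F) t ξ = I * ξ * spatialFourier F t ξ := by
  have hd (x : ℝ) := (hF.hasDerivAt_partialX x t).ofReal_comp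
  have hderiv : deriv (fun y => (F (y, t) : ℂ)) = fun x => (MKdV.partialX F (x, t) : ℂ) :=
    funext fun x => (hd x).deriv
  have h := congrFun (Real.fourier_deriv (hF.integrable ht).ofReal
    (fun x => (hd x).differentiableAt) (hderiv ▸ (hF.partialX.integrable ht).ofReal))
    (ξ / (2 * Real.pi))
  have hπ : (Real.pi : ℂ) ≠ 0 := ofReal_ne_zero.2 Real.pi_ne_zero
  rw [spatialFourier, spatialFourier, angFourier_eq_fourier, angFourier_eq_fourier, ← hderiv, h,
    smul_eq_mul]
  congr 1
  push_cast
  field_simp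

lemma spatialFourier_iterate_partialX (hF : IsSchwartzOnStrip T F) (ht : t ∈ Set.Icc (-T) T)
    (n : ℕ) (ξ : ℝ) :
    spatialFourier (MKdV.partialX^[n] F) t ξ = (I * ξ) ^ n * spatialFourier F t ξ := by
  induction n with
  | zero => simp
  | succ n ih =>
    rw [Function.iterate_succ_apply', (hF.iterate_partialX n).spatialFourier_partialX ht, ih]
    ring

lemma exists_pow_mul_norm_spatialFourier_le (hF : IsSchwartzOnStrip T F)
    (ht : t ∈ Set.Icc (-T) T) (k : ℕ) :
    ∃ D : ℝ, ∀ ξ, |ξ| ^ k * ‖spatialFourier F t ξ‖ ≤ D * (1 + ξ ^ 2)⁻¹ := by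
  have hbound (n : ℕ) (ξ : ℝ) : |ξ| ^ n * ‖spatialFourier F t ξ‖ ≤
      ∫ x, ‖((MKdV.partialX^[n] F (x, t) : ℝ) : ℂ)‖ := by
    have h := norm_angFourier_le (fun y => ((MKdV.partialX^[n] F (y, t) : ℝ) : ℂ)) ξ
    rwa [← spatialFourier, hF.spatialFourier_iterate_partialX ht, norm_mul, norm_pow, norm_mul,
      Complex.norm_I, one_mul, Complex.norm_real, Real.norm_eq_abs] at h
  refine ⟨(∫ x, ‖((MKdV.partialX^[k] F (x, t) : ℝ) : ℂ)‖) +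
    ∫ x, ‖((MKdV.partialX^[k + 2] F (x, t) : ℝ) : ℂ)‖, fun ξ => ?_⟩
  rw [← div_eq_mul_inv, le_div_iff₀' (by positivity)]
  refine le_trans (le_of_eq ?_) (add_le_add (hbound k ξ) (hbound (k + 2) ξ))
  rw [pow_add, sq_abs]
  ring

lemma integrable_mul_spatialFourier (hF : IsSchwartzOnStrip T F) (ht : t ∈ Set.Icc (-T) T)
    {κ : ℝ → ℂ} {k : ℕ} {c : ℝ} (hκ : Measurable κ) (hc : 0 ≤ c) (hle : ∀ ξ, ‖κ ξ‖ ≤ c * |ξ| ^ k) :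
    Integrable fun ξ => κ ξ * spatialFourier F t ξ := by
  obtain ⟨D, hD⟩ := hF.exists_pow_mul_norm_spatialFourier_le ht k
  refine (integrable_inv_one_add_sq.const_mul (c * D)).mono'
    (hκ.mul (hF.continuous_spatialFourier ht).measurable).aestronglyMeasurable
    (.of_forall fun ξ => ?_)
  calc ‖κ ξ * spatialFourier F t ξ‖ = ‖κ ξ‖ * ‖spatialFourier F t ξ‖ := norm_mul _ _
    _ ≤ c * |ξ| ^ k * ‖spatialFourier F t ξ‖ := by
        gcongr
        exact hle ξ
    _ = c * (|ξ| ^ k * ‖spatialFourier F t ξ‖) := mul_assoc _ _ _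
    _ ≤ c * (D * (1 + ξ ^ 2)⁻¹) := mul_le_mul_of_nonneg_left (hD ξ) hc
    _ = c * D * (1 + ξ ^ 2)⁻¹ := (mul_assoc _ _ _).symm

lemma integrable_spatialFourier (hF : IsSchwartzOnStrip T F) (ht : t ∈ Set.Icc (-T) T) :
    Integrable (spatialFourier F t) := by
  simpa using hF.integrable_mul_spatialFourier ht (κ := fun _ => 1) (k := 0) measurable_const
    zero_le_one (by simp)

lemma angFourierInv_spatialFourier (hF : IsSchwartzOnStrip T F) (ht : t ∈ Set.Icc (-T) T) (x : ℝ) :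
    angFourierInv (spatialFourier F t) x = F (x, t) := by
  have := hF.continuous
  exact angFourierInv_angFourier (f := fun y => (F (y, t) : ℂ)) (by fun_prop)
    (hF.integrable ht).ofReal (hF.integrable_spatialFourier ht) x

lemma hasDerivAt_spatialFourier (hF : IsSchwartzOnStrip T F) (ht : t ∈ Set.Ioo (-T) T) (ξ : ℝ) :
    HasDerivAt (fun s => spatialFourier F s ξ) (spatialFourier (MKdV.partialT F) t ξ) t :=
  hF.hasDerivAt_integral_mul ht (by fun_prop) fun x => (norm_cexp_neg_I_mul_mul x ξ).le

end IsSchwartzOnStrip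

/-- The space-time Fourier transform `v̂(ξ, τ)`. -/
noncomputable def spaceTimeFourier (v : ℝ × ℝ → ℝ) (p : ℝ × ℝ) : ℂ :=
  ∫ q : ℝ × ℝ, cexp (-I * (q.1 * p.1 + q.2 * p.2)) * v q

section SpaceTimeFourier

variable {v : ℝ × ℝ → ℝ}

lemma measurable_spaceTimeFourier (hv : Continuous v) : Measurable (spaceTimeFourier v) :=
  (Continuous.stronglyMeasurable (f := fun w : (ℝ × ℝ) × (ℝ × ℝ) =>
    cexp (-I * (w.2.1 * w.1.1 + w.2.2 * w.1.2)) * (v w.2 : ℂ))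
    (by fun_prop)).integral_prod_right'.measurable

lemma integrable_cexp_neg_I_mul_add_mul (hv : Integrable v) (p : ℝ × ℝ) :
    Integrable fun q : ℝ × ℝ => cexp (-I * (q.1 * p.1 + q.2 * p.2)) * v q := by
  refine hv.ofReal.bdd_mul (c := 1) (Continuous.aestronglyMeasurable (by fun_prop))
    (.of_forall fun q => ?_)
  rw [show -I * (q.1 * p.1 + q.2 * p.2) = ((-(q.1 * p.1 + q.2 * p.2) : ℝ) : ℂ) * I by
    push_cast; ring, norm_exp_ofReal_mul_I]

lemma spaceTimeFourier_eq_angFourier (hv : Integrable v) (ξ τ : ℝ) :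
    spaceTimeFourier v (ξ, τ) = angFourier (fun t => spatialFourier v t ξ) τ := by
  have hi := integrable_cexp_neg_I_mul_add_mul hv (ξ, τ)
  rw [Measure.volume_eq_prod] at hi
  rw [spaceTimeFourier, Measure.volume_eq_prod, integral_prod_symm _ hi, angFourier]
  refine integral_congr_ae (.of_forall fun t => ?_)
  simp only [spatialFourier, angFourier, ← integral_const_mul, ← mul_assoc, ← Complex.exp_add]
  refine integral_congr_ae (.of_forall fun y => ?_)
  ring_nf

lemma integrable_spatialFourier_time (hv : Integrable v) (ξ : ℝ) :
    Integrable fun t => spatialFourier v t ξ := by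
  have hi := integrable_cexp_neg_I_mul_add_mul hv (ξ, 0)
  rw [Measure.volume_eq_prod] at hi
  refine hi.integral_prod_right.congr (.of_forall fun t => ?_)
  simp only [spatialFourier, angFourier, Complex.ofReal_zero, mul_zero, add_zero, mul_assoc]

lemma ae_angFourierInv_spaceTimeFourier (hv : Integrable v)
    (hcont : ∀ ξ, Continuous fun t => spatialFourier v t ξ)
    (hint : Integrable (spaceTimeFourier v)) (t : ℝ) :
    ∀ᵐ ξ, angFourierInv (fun τ => spaceTimeFourier v (ξ, τ)) t = spatialFourier v t ξ := by
  rw [Measure.volume_eq_prod] at hint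
  filter_upwards [hint.prod_right_ae] with ξ hξ
  simp only [spaceTimeFourier_eq_angFourier hv] at hξ ⊢
  exact angFourierInv_angFourier (hcont ξ) (integrable_spatialFourier_time hv ξ) hξ t

lemma measurable_spatialFourier (hv : Continuous v) :
    Measurable fun z : ℝ × ℝ => spatialFourier v z.1 z.2 :=
  (Continuous.stronglyMeasurable (f := fun w : (ℝ × ℝ) × ℝ =>
    cexp (-I * w.2 * w.1.2) * (v (w.2, w.1.1) : ℂ))
    (by fun_prop)).integral_prod_right'.measurable

end SpaceTimeFourier

lemma continuous_spatialFourier_time (v : SchwartzMap (ℝ × ℝ) ℝ) (ξ : ℝ) :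
    Continuous fun t => spatialFourier v t ξ :=
  continuous_iff_continuousAt.2 fun t =>
    ((isSchwartzOnStrip_schwartzMap (|t| + 1) v).hasDerivAt_spatialFourier
      ⟨by linarith [neg_abs_le t], by linarith [le_abs_self t]⟩ ξ).continuousAt

lemma integrable_of_bourgainNormSq_lt_top {b σ : ℝ} (hb : 1 / 2 < b) {V : ℝ × ℝ → ℂ}
    (hV : Measurable V) (hfin : bourgainNormSq b σ V < ∞) : Integrable V := by
  refine ⟨hV.aestronglyMeasurable, (lintegral_mono fun p => ?_).trans_lt
    (lintegral_weight_mul_enorm_lt_top hb hV hfin)⟩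
  exact le_mul_of_one_le_left' (one_le_mul
    (ENNReal.one_le_ofReal.2 (le_add_of_nonneg_right (abs_nonneg _)))
    (ENNReal.one_le_ofReal.2 (Real.one_le_cosh _)))

lemma ae_angFourierInv_spaceTimeFourier_schwartzMap {b σ : ℝ} (hb : 1 / 2 < b)
    (v : SchwartzMap (ℝ × ℝ) ℝ) (hfin : bourgainNormSq b σ (spaceTimeFourier v) < ∞) (t : ℝ) :
    ∀ᵐ ξ, angFourierInv (fun τ => spaceTimeFourier v (ξ, τ)) t = spatialFourier v t ξ :=
  ae_angFourierInv_spaceTimeFourier v.integrable (continuous_spatialFourier_time v)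
    (integrable_of_bourgainNormSq_lt_top hb (measurable_spaceTimeFourier v.continuous) hfin) t

/-- The convolution `(g₁ * g₂) / 2π`, normalised so that it corresponds to the pointwise product
under `angFourierInv`. -/
noncomputable def freqConv (g₁ g₂ : ℝ → ℂ) (ξ : ℝ) : ℂ :=
  (1 / (2 * Real.pi) : ℂ) * ∫ η, g₁ η * g₂ (ξ - η)

section FreqConv

variable {g₁ g₂ : ℝ → ℂ}

lemma integrable_freqConv (h₁ : Integrable g₁) (h₂ : Integrable g₂) :
    Integrable (freqConv g₁ g₂) :=
  (h₁.integrable_convolution (ContinuousLinearMap.mul ℂ ℂ) h₂).const_mul _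

lemma continuous_freqConv (h₁ : Integrable g₁) (hc : Continuous g₂) {D : ℝ}
    (hD : ∀ ξ, ‖g₂ ξ‖ ≤ D) : Continuous (freqConv g₁ g₂) :=
  continuous_const.mul (BddAbove.continuous_convolution_right_of_integrable
    (ContinuousLinearMap.mul ℂ ℂ) ⟨D, Set.forall_mem_range.2 hD⟩ h₁ hc)

lemma angFourierInv_freqConv (h₁ : Integrable g₁) (h₂ : Integrable g₂) (x : ℝ) :
    angFourierInv (freqConv g₁ g₂) x = angFourierInv g₁ x * angFourierInv g₂ x := by
  have hconv := integral_convolution (ContinuousLinearMap.mul ℂ ℂ) (integrable_cexp_I_mul h₁ x)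
    (integrable_cexp_I_mul h₂ x)
  simp only [convolution, ContinuousLinearMap.mul_apply'] at hconv
  have hexp (ξ η : ℝ) : cexp (I * x * ξ) * (g₁ η * g₂ (ξ - η)) =
      cexp (I * x * η) * g₁ η * (cexp (I * x * (ξ - η : ℝ)) * g₂ (ξ - η)) := by
    rw [mul_mul_mul_comm, ← Complex.exp_add, ← mul_add, ← Complex.ofReal_add, add_sub_cancel]
  have hpull (ξ : ℝ) : cexp (I * x * ξ) * ∫ η, g₁ η * g₂ (ξ - η) =
      ∫ η : ℝ, cexp (I * x * η) * g₁ η * (cexp (I * x * (ξ - η : ℝ)) * g₂ (ξ - η)) := by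
    rw [← integral_const_mul]
    simp only [hexp]
  unfold freqConv
  rw [angFourierInv_const_mul]
  simp only [angFourierInv, hpull, hconv]
  ring

lemma freqConv_mul_mul {e : ℝ → ℂ} (he : ∀ a b, e a * e (b - a) = e b) (g₁ g₂ : ℝ → ℂ) (ξ : ℝ) :
    freqConv (fun η => e η * g₁ η) (fun η => e η * g₂ η) ξ = e ξ * freqConv g₁ g₂ ξ := by
  have htwist (η : ℝ) : e η * g₁ η * (e (ξ - η) * g₂ (ξ - η)) = e ξ * (g₁ η * g₂ (ξ - η)) := by
    rw [mul_mul_mul_comm, he]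
  simp only [freqConv, htwist, integral_const_mul]
  ring

end FreqConv

/-- The Fourier multiplier with symbol `κ` in the space variable, applied to `F`. -/
noncomputable def fourierMul (κ : ℝ → ℂ) (F : ℝ × ℝ → ℝ) (z : ℝ × ℝ) : ℂ :=
  angFourierInv (fun ξ => κ ξ * spatialFourier F z.2 ξ) z.1

section FourierMul

variable {T t : ℝ} {F G : ℝ × ℝ → ℝ} {κ e : ℝ → ℂ}

lemma spatialFourier_add (hF : IsSchwartzOnStrip T F) (hG : IsSchwartzOnStrip T G)
    (ht : t ∈ Set.Icc (-T) T) (ξ : ℝ) :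
    spatialFourier (fun z => F z + G z) t ξ = spatialFourier F t ξ + spatialFourier G t ξ := by
  have hi {H : ℝ × ℝ → ℝ} (hH : IsSchwartzOnStrip T H) :
      Integrable fun y : ℝ => cexp (-I * y * ξ) * (H (y, t) : ℂ) :=
    (hH.integrable ht).ofReal.bdd_mul (Continuous.aestronglyMeasurable (by fun_prop))
      (.of_forall fun y => (norm_cexp_neg_I_mul_mul y ξ).le)
  simp only [spatialFourier, angFourier, Complex.ofReal_add, mul_add]
  exact integral_add (hi hF) (hi hG)

lemma spatialFourier_const_mul (c : ℝ) (F : ℝ × ℝ → ℝ) (t ξ : ℝ) :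
    spatialFourier (fun z => c * F z) t ξ = c * spatialFourier F t ξ := by
  simp only [spatialFourier, angFourier, Complex.ofReal_mul, mul_left_comm _ (c : ℂ),
    integral_const_mul]

lemma spatialFourier_mul (hF : IsSchwartzOnStrip T F) (hG : IsSchwartzOnStrip T G)
    (ht : t ∈ Set.Icc (-T) T) :
    spatialFourier (fun z => F z * G z) t =
      freqConv (spatialFourier F t) (spatialFourier G t) := by
  have hprod (x : ℝ) : angFourierInv (freqConv (spatialFourier F t) (spatialFourier G t)) x =
      ((F (x, t) * G (x, t) : ℝ) : ℂ) := by
    rw [angFourierInv_freqConv (hF.integrable_spatialFourier ht) (hG.integrable_spatialFourier ht),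
      hF.angFourierInv_spatialFourier ht, hG.angFourierInv_spatialFourier ht, Complex.ofReal_mul]
  ext ξ
  rw [← angFourier_angFourierInv (continuous_freqConv (hF.integrable_spatialFourier ht)
    (hG.continuous_spatialFourier ht) fun _ => norm_angFourier_le _ _)
    (integrable_freqConv (hF.integrable_spatialFourier ht) (hG.integrable_spatialFourier ht))
    (funext hprod ▸ ((hF.mul hG).integrable ht).ofReal) ξ, funext hprod]
  rfl

lemma fourierMul_add (hF : IsSchwartzOnStrip T F) (hG : IsSchwartzOnStrip T G)
    (ht : t ∈ Set.Icc (-T) T) (hiF : Integrable fun ξ => κ ξ * spatialFourier F t ξ)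
    (hiG : Integrable fun ξ => κ ξ * spatialFourier G t ξ) (x : ℝ) :
    fourierMul κ (fun z => F z + G z) (x, t) = fourierMul κ F (x, t) + fourierMul κ G (x, t) := by
  simp only [fourierMul, spatialFourier_add hF hG ht, mul_add]
  exact angFourierInv_add hiF hiG x

lemma fourierMul_const_mul (c : ℝ) (κ : ℝ → ℂ) (F : ℝ × ℝ → ℝ) (z : ℝ × ℝ) :
    fourierMul κ (fun z => c * F z) z = c * fourierMul κ F z := by
  simp only [fourierMul, spatialFourier_const_mul, mul_left_comm _ (c : ℂ)]
  exact angFourierInv_const_mul _ _ _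

lemma integrable_mul_spatialFourier_mul (hF : IsSchwartzOnStrip T F) (hG : IsSchwartzOnStrip T G)
    (ht : t ∈ Set.Icc (-T) T) (he : ∀ a b, e a * e (b - a) = e b)
    (hiF : Integrable fun ξ => e ξ * spatialFourier F t ξ)
    (hiG : Integrable fun ξ => e ξ * spatialFourier G t ξ) :
    Integrable fun ξ => e ξ * spatialFourier (fun z => F z * G z) t ξ := by
  simp only [spatialFourier_mul hF hG ht, ← freqConv_mul_mul he]
  exact integrable_freqConv hiF hiG

lemma fourierMul_mul (hF : IsSchwartzOnStrip T F) (hG : IsSchwartzOnStrip T G)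
    (ht : t ∈ Set.Icc (-T) T) (he : ∀ a b, e a * e (b - a) = e b)
    (hiF : Integrable fun ξ => e ξ * spatialFourier F t ξ)
    (hiG : Integrable fun ξ => e ξ * spatialFourier G t ξ) (x : ℝ) :
    fourierMul e (fun z => F z * G z) (x, t) = fourierMul e F (x, t) * fourierMul e G (x, t) := by
  simp only [fourierMul, spatialFourier_mul hF hG ht, ← freqConv_mul_mul he]
  exact angFourierInv_freqConv hiF hiG x

lemma hasDerivAt_fourierMul (hF : IsSchwartzOnStrip T F) (ht : t ∈ Set.Icc (-T) T)
    (hi : Integrable fun ξ => κ ξ * spatialFourier F t ξ)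
    (hi' : Integrable fun ξ => κ ξ * spatialFourier (partialX F) t ξ) (x : ℝ) :
    HasDerivAt (fun y => fourierMul κ F (y, t)) (fourierMul κ (partialX F) (x, t)) x := by
  simp only [fourierMul, hF.spatialFourier_partialX ht, mul_left_comm (κ _)] at hi' ⊢
  exact hasDerivAt_angFourierInv hi hi' x

end FourierMul

/-- The symbol of `∂ₓᵃ cosh(σD)`. -/
noncomputable def coshSymbol (σ : ℝ) (a : ℕ) (ξ : ℝ) : ℂ := (I * ξ) ^ a * (Real.cosh (σ * ξ) : ℝ)

/-- The symbol of `∂ₓᵃ sinh(σD)`. -/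
noncomputable def sinhSymbol (σ : ℝ) (a : ℕ) (ξ : ℝ) : ℂ := (I * ξ) ^ a * (Real.sinh (σ * ξ) : ℝ)

/-- The symbol of `e^{σD}`, the complex translation by `-iσ`. -/
noncomputable def expSymbol (σ ξ : ℝ) : ℂ := (Real.exp (σ * ξ) : ℝ)

lemma abs_sinh_le_abs_mul_cosh (y : ℝ) : |Real.sinh y| ≤ |y| * Real.cosh y := by
  have hcosh : ∀ z ∈ Set.uIcc 0 y, ‖Real.cosh z‖ ≤ Real.cosh y := fun z hz => by
    rw [Real.norm_of_nonneg (Real.cosh_pos z).le, Real.cosh_le_cosh]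
    simpa using Set.abs_sub_left_of_mem_uIcc hz
  simpa [mul_comm] using (convex_uIcc 0 y).norm_image_sub_le_of_norm_hasDerivWithin_le
    (fun z _ => (Real.hasDerivAt_sinh z).hasDerivWithinAt) hcosh Set.left_mem_uIcc
    Set.right_mem_uIcc

lemma norm_I_mul_pow (ξ : ℝ) (a : ℕ) : ‖(I * ξ : ℂ) ^ a‖ = |ξ| ^ a := by
  rw [norm_pow, norm_mul, norm_I, one_mul, norm_real, Real.norm_eq_abs]

lemma isSymbol_coshSymbol (σ : ℝ) (a : ℕ) : IsSymbol σ a 1 (coshSymbol σ a) where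
  measurable := by
    have := Real.continuous_cosh
    unfold coshSymbol
    exact Continuous.measurable (by fun_prop)
  norm_le ξ := by
    rw [coshSymbol, norm_mul, norm_I_mul_pow, norm_real,
      Real.norm_of_nonneg (Real.cosh_pos _).le, one_mul]

lemma isSymbol_sinhSymbol (σ : ℝ) (a : ℕ) : IsSymbol σ (a + 1) |σ| (sinhSymbol σ a) where
  measurable := by
    have := Real.continuous_sinh
    unfold sinhSymbol
    exact Continuous.measurable (by fun_prop)
  norm_le ξ := by
    rw [sinhSymbol, norm_mul, norm_I_mul_pow, norm_real, Real.norm_eq_abs]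
    calc |ξ| ^ a * |Real.sinh (σ * ξ)| ≤ |ξ| ^ a * (|σ * ξ| * Real.cosh (σ * ξ)) := by
          gcongr
          exact abs_sinh_le_abs_mul_cosh _
      _ = |σ| * |ξ| ^ (a + 1) * Real.cosh (σ * ξ) := by
          rw [abs_mul]
          ring

lemma isSymbol_expSymbol (σ : ℝ) : IsSymbol σ 0 2 (expSymbol σ) where
  measurable := by
    unfold expSymbol
    exact Continuous.measurable (by fun_prop)
  norm_le ξ := by
    rw [expSymbol, norm_real, Real.norm_of_nonneg (Real.exp_pos _).le, pow_zero, mul_one,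
      Real.cosh_eq]
    linarith [Real.exp_pos (-(σ * ξ))]

lemma expSymbol_mul (σ a b : ℝ) : expSymbol σ a * expSymbol σ (b - a) = expSymbol σ b := by
  rw [expSymbol, expSymbol, expSymbol, ← Complex.ofReal_mul, ← Real.exp_add, ← mul_add,
    add_sub_cancel]

lemma expSymbol_eq (σ ξ : ℝ) : expSymbol σ ξ = coshSymbol σ 0 ξ + sinhSymbol σ 0 ξ := by
  rw [expSymbol, coshSymbol, sinhSymbol, pow_zero, one_mul, one_mul, ← Complex.ofReal_add,
    Real.cosh_add_sinh]

/-- At time `t`, `F = cosh(σD) v` on the Fourier side. -/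
def IsCoshLiftAt (σ t : ℝ) (F v : ℝ × ℝ → ℝ) : Prop :=
  ∀ ξ, spatialFourier F t ξ = (Real.cosh (σ * ξ) : ℝ) * spatialFourier v t ξ

/-- The function `sinh(σD) v`. -/
noncomputable def sinhLift (σ : ℝ) (v : ℝ × ℝ → ℝ) : ℝ × ℝ → ℂ := fourierMul (sinhSymbol σ 0) v

lemma sinhLift_neg (σ : ℝ) (v : ℝ × ℝ → ℝ) (z : ℝ × ℝ) : sinhLift (-σ) v z = -sinhLift σ v z := by
  have hneg (ξ : ℝ) : sinhSymbol (-σ) 0 ξ = -1 * sinhSymbol σ 0 ξ := by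
    simp [sinhSymbol, Real.sinh_neg]
  simp only [sinhLift, fourierMul, hneg, mul_assoc]
  rw [angFourierInv_const_mul, neg_one_mul]

section Lift

variable {σ T t c μ : ℝ} {F v : ℝ × ℝ → ℝ} {κ : ℝ → ℂ} {o : ℕ}

lemma sinhLift_iterate_partialX (hv : IsSchwartzOnStrip T v) (ht : t ∈ Set.Icc (-T) T) (a : ℕ)
    (x : ℝ) : sinhLift σ (partialX^[a] v) (x, t) = fourierMul (sinhSymbol σ a) v (x, t) := by
  simp only [sinhLift, fourierMul, hv.spatialFourier_iterate_partialX ht, sinhSymbol, pow_zero,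
    one_mul, mul_left_comm, mul_assoc]

namespace IsCoshLiftAt

lemma neg (h : IsCoshLiftAt σ t F v) : IsCoshLiftAt (-σ) t F v := fun ξ => by
  rw [h ξ, neg_mul, Real.cosh_neg]

lemma iterate_partialX (h : IsCoshLiftAt σ t F v) (hF : IsSchwartzOnStrip T F)
    (hv : IsSchwartzOnStrip T v) (ht : t ∈ Set.Icc (-T) T) (a : ℕ) :
    IsCoshLiftAt σ t (partialX^[a] F) (partialX^[a] v) := fun ξ => by
  rw [hF.spatialFourier_iterate_partialX ht, hv.spatialFourier_iterate_partialX ht, h ξ,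
    mul_left_comm]

lemma partialT (h : ∀ s ∈ Set.Ioo (-T) T, IsCoshLiftAt σ s F v) (hF : IsSchwartzOnStrip T F)
    (hv : IsSchwartzOnStrip T v) (ht : t ∈ Set.Ioo (-T) T) :
    IsCoshLiftAt σ t (partialT F) (partialT v) := fun ξ => by
  refine (hF.hasDerivAt_spatialFourier ht ξ).unique
    (((hv.hasDerivAt_spatialFourier ht ξ).const_mul _).congr_of_eventuallyEq ?_)
  filter_upwards [Ioo_mem_nhds ht.1 ht.2] with s hs using h s hs ξ

lemma integrable_mul (h : IsCoshLiftAt σ t F v) (hF : IsSchwartzOnStrip T F)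
    (ht : t ∈ Set.Icc (-T) T) (hκ : IsSymbol σ o c κ) :
    Integrable fun ξ => κ ξ * spatialFourier v t ξ := by
  have hcosh (ξ : ℝ) := Real.cosh_pos (σ * ξ)
  have hi := hF.integrable_mul_spatialFourier ht (κ := fun ξ => κ ξ / (Real.cosh (σ * ξ) : ℝ))
    (hκ.measurable.div (measurable_cosh_mul σ).complex_ofReal) hκ.nonneg fun ξ => by
      rw [norm_div, norm_real, Real.norm_of_nonneg (hcosh ξ).le, div_le_iff₀ (hcosh ξ)]
      exact hκ.norm_le ξ
  refine hi.congr (.of_forall fun ξ => ?_)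
  simp only [h ξ]
  rw [← mul_assoc, div_mul_cancel₀ _ (ofReal_ne_zero.2 (hcosh ξ).ne')]

lemma fourierMul_coshSymbol (h : IsCoshLiftAt σ t F v) (hF : IsSchwartzOnStrip T F)
    (ht : t ∈ Set.Icc (-T) T) (a : ℕ) (x : ℝ) :
    fourierMul (coshSymbol σ a) v (x, t) = partialX^[a] F (x, t) := by
  rw [← (hF.iterate_partialX a).angFourierInv_spatialFourier ht, fourierMul]
  congr 1
  ext ξ
  rw [hF.spatialFourier_iterate_partialX ht, h ξ, coshSymbol, mul_assoc]

lemma fourierMul_expSymbol (h : IsCoshLiftAt σ t F v) (hF : IsSchwartzOnStrip T F)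
    (ht : t ∈ Set.Icc (-T) T) (x : ℝ) :
    fourierMul (expSymbol σ) v (x, t) = F (x, t) + sinhLift σ v (x, t) := by
  have hcosh := h.fourierMul_coshSymbol hF ht 0 x
  rw [Function.iterate_zero_apply] at hcosh
  rw [← hcosh, sinhLift]
  simp only [fourierMul, expSymbol_eq, add_mul]
  exact angFourierInv_add (h.integrable_mul hF ht (isSymbol_coshSymbol σ 0))
    (h.integrable_mul hF ht (isSymbol_sinhSymbol σ 0)) x

lemma hasDerivAt_sinhLift (h : IsCoshLiftAt σ t F v) (hF : IsSchwartzOnStrip T F)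
    (hv : IsSchwartzOnStrip T v) (ht : t ∈ Set.Icc (-T) T) (x : ℝ) :
    HasDerivAt (fun y => sinhLift σ v (y, t)) (sinhLift σ (partialX v) (x, t)) x :=
  hasDerivAt_fourierMul hv ht (h.integrable_mul hF ht (isSymbol_sinhSymbol σ 0))
    ((h.iterate_partialX hF hv ht 1).integrable_mul hF.partialX ht (isSymbol_sinhSymbol σ 0)) x

end IsCoshLiftAt

/-- The left-hand side `∂ₜF + ∂ₓ³F + μ F² ∂ₓF` of the mKdV equation. -/
noncomputable def mkdvForcing (μ : ℝ) (F : ℝ × ℝ → ℝ) (z : ℝ × ℝ) : ℝ :=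
  partialT F z + partialX^[3] F z + μ * (F z ^ 2 * partialX F z)

lemma IsSchwartzOnStrip.mkdvForcing (hF : IsSchwartzOnStrip T F) (μ : ℝ) :
    IsSchwartzOnStrip T (mkdvForcing μ F) :=
  (hF.partialT.add (hF.iterate_partialX 3)).add (((hF.pow_succ 1).mul hF.partialX).const_mul μ)

lemma fourierMul_mkdvForcing (hv : IsSchwartzOnStrip T v) (ht : t ∈ Set.Icc (-T) T) {e : ℝ → ℂ}
    (he : ∀ a b, e a * e (b - a) = e b)
    (hiT : Integrable fun ξ => e ξ * spatialFourier (partialT v) t ξ)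
    (hi₃ : Integrable fun ξ => e ξ * spatialFourier (partialX^[3] v) t ξ)
    (hi₁ : Integrable fun ξ => e ξ * spatialFourier (partialX v) t ξ)
    (hi₀ : Integrable fun ξ => e ξ * spatialFourier v t ξ) (x : ℝ) :
    fourierMul e (mkdvForcing μ v) (x, t) =
      fourierMul e (partialT v) (x, t) + fourierMul e (partialX^[3] v) (x, t) +
        μ * (fourierMul e v (x, t) ^ 2 * fourierMul e (partialX v) (x, t)) := by
  have hv₃ := hv.iterate_partialX 3
  have hv₁ := hv.partialX
  have hi₀₁ := integrable_mul_spatialFourier_mul hv hv₁ ht he hi₀ hi₁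
  have hi₀₀₁ := integrable_mul_spatialFourier_mul hv (hv.mul hv₁) ht he hi₀ hi₀₁
  have hform : mkdvForcing μ v =
      fun z => (partialT v z + partialX^[3] v z) + μ * (v z * (v z * partialX v z)) := by
    ext z
    rw [mkdvForcing]
    ring
  rw [hform, fourierMul_add (hv.partialT.add hv₃) ((hv.mul (hv.mul hv₁)).const_mul μ) ht,
    fourierMul_add hv.partialT hv₃ ht hiT hi₃, fourierMul_const_mul,
    fourierMul_mul hv (hv.mul hv₁) ht he hi₀ hi₀₁, fourierMul_mul hv hv₁ ht he hi₀ hi₁]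
  · ring
  · simp only [spatialFourier_add hv.partialT hv₃ ht, mul_add]
    exact hiT.add hi₃
  · simpa only [spatialFourier_const_mul, mul_left_comm _ (μ : ℂ)] using hi₀₀₁.const_mul (μ : ℂ)

lemma fourierMul_expSymbol_mkdvForcing (hF : IsSchwartzOnStrip T F) (hv : IsSchwartzOnStrip T v)
    (hlift : ∀ s ∈ Set.Icc (-T) T, IsCoshLiftAt σ s F v) (ht : t ∈ Set.Ioo (-T) T) (x : ℝ) :
    fourierMul (expSymbol σ) (mkdvForcing μ v) (x, t) =
      (partialT F (x, t) + sinhLift σ (partialT v) (x, t)) +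
        (partialX^[3] F (x, t) + sinhLift σ (partialX^[3] v) (x, t)) +
        μ * ((F (x, t) + sinhLift σ v (x, t)) ^ 2 *
          (partialX F (x, t) + sinhLift σ (partialX v) (x, t))) := by
  have ht' := Set.Ioo_subset_Icc_self ht
  have hF₃ := hF.iterate_partialX 3
  have h₀ := hlift t ht'
  have h₁ : IsCoshLiftAt σ t (partialX F) (partialX v) := h₀.iterate_partialX hF hv ht' 1
  have h₃ := h₀.iterate_partialX hF hv ht' 3
  have hT := IsCoshLiftAt.partialT (fun s hs => hlift s (Set.Ioo_subset_Icc_self hs)) hF hv ht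
  have hexp := isSymbol_expSymbol σ
  rw [fourierMul_mkdvForcing hv ht' (expSymbol_mul σ) (hT.integrable_mul hF.partialT ht' hexp)
    (h₃.integrable_mul hF₃ ht' hexp) (h₁.integrable_mul hF.partialX ht' hexp)
    (h₀.integrable_mul hF ht' hexp), hT.fourierMul_expSymbol hF.partialT ht',
    h₃.fourierMul_expSymbol hF₃ ht', h₁.fourierMul_expSymbol hF.partialX ht',
    h₀.fourierMul_expSymbol hF ht']

lemma fourierMul_eq_zero (κ : ℝ → ℂ) (h : ∀ x, F (x, t) = 0) (x : ℝ) :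
    fourierMul κ F (x, t) = 0 := by
  simp [fourierMul, spatialFourier, angFourier, angFourierInv, h]

lemma mkdvForcing_eq (hF : IsSchwartzOnStrip T F) (hv : IsSchwartzOnStrip T v)
    (hlift : ∀ s ∈ Set.Icc (-T) T, IsCoshLiftAt σ s F v) (ht : t ∈ Set.Ioo (-T) T)
    (hpde : ∀ x, mkdvForcing μ v (x, t) = 0) (x : ℝ) :
    (mkdvForcing μ F (x, t) : ℂ) =
      -μ * (sinhLift σ v (x, t) ^ 2 * partialX F (x, t) +
        2 * F (x, t) * sinhLift σ v (x, t) * sinhLift σ (partialX v) (x, t)) := by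
  -- average the equations for `e^{σD} v` and `e^{-σD} v`
  have hplus := fourierMul_expSymbol_mkdvForcing (μ := μ) hF hv hlift ht x
  have hminus := fourierMul_expSymbol_mkdvForcing (μ := μ) hF hv (fun s hs => (hlift s hs).neg) ht x
  rw [fourierMul_eq_zero _ hpde] at hplus hminus
  simp only [sinhLift_neg] at hminus
  rw [mkdvForcing]
  push_cast
  linear_combination -(hplus + hminus) / 2

lemma partialX_mkdvForcing_eq (hF : IsSchwartzOnStrip T F) (hv : IsSchwartzOnStrip T v)
    (hlift : ∀ s ∈ Set.Icc (-T) T, IsCoshLiftAt σ s F v) (ht : t ∈ Set.Ioo (-T) T)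
    (hpde : ∀ x, mkdvForcing μ v (x, t) = 0) (x : ℝ) :
    (partialX (mkdvForcing μ F) (x, t) : ℂ) =
      -μ * (sinhLift σ v (x, t) ^ 2 * partialX^[2] F (x, t) +
        4 * sinhLift σ v (x, t) * sinhLift σ (partialX v) (x, t) * partialX F (x, t) +
        2 * F (x, t) * sinhLift σ (partialX v) (x, t) ^ 2 +
        2 * F (x, t) * sinhLift σ v (x, t) * sinhLift σ (partialX^[2] v) (x, t)) := by
  have ht' := Set.Ioo_subset_Icc_self ht
  have h₀ := hlift t ht'
  have hY₀ := h₀.hasDerivAt_sinhLift hF hv ht' x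
  have hY₁ := (h₀.iterate_partialX hF hv ht' 1).hasDerivAt_sinhLift hF.partialX hv.partialX ht' x
  have hF₀ := (hF.hasDerivAt_partialX x t).ofReal_comp
  have hF₁ := (hF.partialX.hasDerivAt_partialX x t).ofReal_comp
  have hforcing := ((hF.mkdvForcing μ).hasDerivAt_partialX x t).ofReal_comp
  simp only [mkdvForcing_eq hF hv hlift ht hpde] at hforcing
  refine hforcing.unique (((((hY₀.pow 2).mul hF₁).add
    (((hF₀.const_mul 2).mul hY₀).mul hY₁)).const_mul (-μ : ℂ)).congr_deriv ?_)
  simp only [Function.iterate_succ_apply, Function.iterate_zero_apply, Pi.pow_apply, Pi.mul_apply]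
  push_cast
  ring

end Lift

lemma isCoshLiftAt_of_eq_fourierMul {b σ T t : ℝ} {F : ℝ × ℝ → ℝ} (hb : 1 / 2 < b)
    (hF : IsSchwartzOnStrip T F) (v : SchwartzMap (ℝ × ℝ) ℝ)
    (hfin : bourgainNormSq b σ (spaceTimeFourier v) < ∞) (ht : t ∈ Set.Icc (-T) T)
    (h : ∀ x, (F (x, t) : ℂ) = fourierMul (coshSymbol σ 0) v (x, t)) : IsCoshLiftAt σ t F v := by
  have hcosh : Continuous fun ξ : ℝ => coshSymbol σ 0 ξ * spatialFourier v t ξ := by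
    have := Real.continuous_cosh
    have := (isSchwartzOnStrip_schwartzMap T v).continuous_spatialFourier ht
    unfold coshSymbol
    fun_prop
  have hlt := (sq_lintegral_weight_mul_enorm_slice_le (measurable_spaceTimeFourier v.continuous)
    (ae_angFourierInv_spaceTimeFourier_schwartzMap hb v hfin t)).trans_lt
    (ENNReal.mul_lt_top (sobolevConst_lt_top hb) hfin)
  have hint : Integrable fun ξ : ℝ => coshSymbol σ 0 ξ * spatialFourier v t ξ := by
    refine ⟨hcosh.aestronglyMeasurable, (lintegral_mono fun ξ => ?_).trans_lt
      ((ENNReal.pow_lt_top_iff.1 hlt).resolve_right two_ne_zero)⟩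
    rw [enorm_mul, coshSymbol, pow_zero, one_mul, ← ofReal_norm, norm_real,
      Real.norm_of_nonneg (Real.cosh_pos _).le]
    exact mul_le_mul' (le_mul_of_one_le_left' (ENNReal.one_le_ofReal.2
      (le_add_of_nonneg_right (abs_nonneg _)))) le_rfl
  intro ξ
  have hinv := angFourier_angFourierInv hcosh hint
    ((hF.integrable ht).ofReal.congr (.of_forall fun x => h x)) ξ
  rw [coshSymbol, pow_zero, one_mul] at hinv
  exact (congrArg (angFourier · ξ) (funext h)).trans hinv

section Balance

variable {T t : ℝ} {ρ j F : ℝ × ℝ → ℝ}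

lemma IsSchwartzOnStrip.hasDerivAt_integral_of_balance (hρ : IsSchwartzOnStrip T ρ)
    (hj : IsSchwartzOnStrip T j) (ht : t ∈ Set.Ioo (-T) T) {e j' : ℝ → ℝ}
    (hρt : ∀ x, HasDerivAt (fun s => ρ (x, s)) (j' x + e x) t)
    (hjx : ∀ x, HasDerivAt (fun y => j (y, t)) (j' x) x) :
    HasDerivAt (fun s => ∫ x, ρ (x, s)) (∫ x, e x) t := by
  have ht' := Set.Ioo_subset_Icc_self ht
  have he : e = fun x => MKdV.partialT ρ (x, t) - MKdV.partialX j (x, t) := by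
    ext x
    rw [(hρ.hasDerivAt_partialT x t).unique (hρt x), (hj.hasDerivAt_partialX x t).unique (hjx x),
      add_sub_cancel_left]
  rw [he, integral_sub (hρ.partialT.integrable ht') (hj.partialX.integrable ht'),
    hj.integral_partialX ht', sub_zero]
  exact hρ.hasDerivAt_integral ht

lemma IsSchwartzOnStrip.partialT_iterate_partialX (hF : IsSchwartzOnStrip T F) (n : ℕ) :
    MKdV.partialT (MKdV.partialX^[n] F) = MKdV.partialX^[n] (MKdV.partialT F) := by
  induction n with
  | zero => rfl
  | succ n ih =>
    rw [Function.iterate_succ_apply', ← (hF.iterate_partialX n).partialX_partialT, ih,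
      ← Function.iterate_succ_apply' MKdV.partialX]

end Balance

section Energy

variable {T t : ℝ} {F : ℝ × ℝ → ℝ}

lemma IsSchwartzOnStrip.partialX_partialT_add (hF : IsSchwartzOnStrip T F) (μ x t : ℝ) :
    MKdV.partialX (MKdV.partialT F) (x, t) + MKdV.partialX^[4] F (x, t) +
      μ * (2 * F (x, t) * MKdV.partialX F (x, t) ^ 2 +
        F (x, t) ^ 2 * MKdV.partialX^[2] F (x, t)) =
      MKdV.partialX (MKdV.mkdvForcing μ F) (x, t) := by
  have hF₀ := hF.hasDerivAt_partialX x t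
  have hF₁ := hF.partialX.hasDerivAt_partialX x t
  have hF₃ := (hF.iterate_partialX 3).hasDerivAt_partialX x t
  refine (((((hF.partialT.hasDerivAt_partialX x t).add hF₃).add
    (((hF₀.pow 2).mul hF₁).const_mul μ)).congr_deriv ?_).unique
    ((hF.mkdvForcing μ).hasDerivAt_partialX x t))
  simp only [Function.iterate_succ_apply, Function.iterate_zero_apply, Pi.pow_apply]
  ring

lemma hasDerivAt_integral_mass (hF : IsSchwartzOnStrip T F) (μ : ℝ) (ht : t ∈ Set.Ioo (-T) T) :
    HasDerivAt (fun s => ∫ x, F (x, s) ^ 2) (∫ x, 2 * F (x, t) * mkdvForcing μ F (x, t)) t := by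
  have hj : IsSchwartzOnStrip T fun z =>
      partialX F z ^ 2 - 2 * (F z * partialX^[2] F z) - μ / 2 * F z ^ 4 :=
    ((hF.partialX.pow_succ 1).sub ((hF.mul (hF.iterate_partialX 2)).const_mul 2)).sub
      ((hF.pow_succ 3).const_mul (μ / 2))
  refine (hF.pow_succ 1).hasDerivAt_integral_of_balance hj ht
    (fun x => ((hF.hasDerivAt_partialT x t).pow 2).congr_deriv ?_)
    (fun x => (hj.hasDerivAt_partialX x t))
  have hF₀ := hF.hasDerivAt_partialX x t
  have hF₁ := hF.partialX.hasDerivAt_partialX x t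
  have hF₂ := (hF.iterate_partialX 2).hasDerivAt_partialX x t
  rw [(hj.hasDerivAt_partialX x t).unique (((hF₁.pow 2).sub
    ((hF₀.mul hF₂).const_mul 2)).sub ((hF₀.pow 4).const_mul (μ / 2))), mkdvForcing]
  simp only [Function.iterate_succ_apply, Function.iterate_zero_apply]
  ring

lemma hasDerivAt_integral_energy (hF : IsSchwartzOnStrip T F) (μ : ℝ)
    (ht : t ∈ Set.Ioo (-T) T) :
    HasDerivAt (fun s => ∫ x, (partialX F (x, s) ^ 2 - μ / 6 * F (x, s) ^ 4))
      (∫ x, -(2 * partialX^[2] F (x, t) + 2 * μ / 3 * F (x, t) ^ 3) * mkdvForcing μ F (x, t))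
      t := by
  have hF₂ := hF.iterate_partialX 2
  have hj : IsSchwartzOnStrip T fun z =>
      2 * (partialX F z * partialT F z) + partialX^[2] F z ^ 2 +
        2 * μ / 3 * (F z ^ 3 * partialX^[2] F z) + μ ^ 2 / 9 * F z ^ 6 :=
    ((((hF.partialX.mul hF.partialT).const_mul 2).add (hF₂.pow_succ 1)).add
      (((hF.pow_succ 2).mul hF₂).const_mul (2 * μ / 3))).add ((hF.pow_succ 5).const_mul (μ ^ 2 / 9))
  refine ((hF.partialX.pow_succ 1).sub
    ((hF.pow_succ 3).const_mul (μ / 6))).hasDerivAt_integral_of_balance hj ht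
    (fun x => (((hF.partialX.hasDerivAt_partialT x t).pow 2).sub
      (((hF.hasDerivAt_partialT x t).pow 4).const_mul (μ / 6))).congr_deriv ?_)
    (fun x => (hj.hasDerivAt_partialX x t))
  have ha := hF.hasDerivAt_partialX x t
  have hb := hF.partialX.hasDerivAt_partialX x t
  have hc := hF₂.hasDerivAt_partialX x t
  have hp := hF.partialT.hasDerivAt_partialX x t
  rw [(hj.hasDerivAt_partialX x t).unique (((((hb.mul hp).const_mul 2).add (hc.pow 2)).add
    (((ha.pow 3).mul hc).const_mul (2 * μ / 3))).add ((ha.pow 6).const_mul (μ ^ 2 / 9))),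
    mkdvForcing, ← hF.partialX_partialT]
  simp only [Function.iterate_succ_apply, Function.iterate_zero_apply, Pi.pow_apply]
  ring

/-- The flux of the second energy density of the mKdV equation. -/
noncomputable def secondEnergyFlux (μ : ℝ) (F : ℝ × ℝ → ℝ) (z : ℝ × ℝ) : ℝ :=
  2 * (partialX^[2] F z * partialX (partialT F) z) + partialX^[3] F z ^ 2 -
    10 * μ / 3 * (F z ^ 2 * (partialX F z * partialT F z)) -
    2 * μ / 3 * (F z ^ 2 * partialX^[2] F z ^ 2) +
    2 * μ / 3 * (F z * (partialX F z ^ 2 * partialX^[2] F z)) - μ / 6 * partialX F z ^ 4 -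
    μ ^ 2 / 3 * (F z ^ 5 * partialX^[2] F z) - 5 * μ ^ 2 / 6 * (F z ^ 4 * partialX F z ^ 2) -
    μ ^ 3 / 24 * F z ^ 8

lemma IsSchwartzOnStrip.secondEnergyFlux (hF : IsSchwartzOnStrip T F) (μ : ℝ) :
    IsSchwartzOnStrip T (MKdV.secondEnergyFlux μ F) := by
  have hb := hF.partialX
  have hc := hF.iterate_partialX 2
  exact ((((((((hc.mul hF.partialT.partialX).const_mul 2).add
    ((hF.iterate_partialX 3).pow_succ 1)).sub
    (((hF.pow_succ 1).mul (hb.mul hF.partialT)).const_mul (10 * μ / 3))).sub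
    (((hF.pow_succ 1).mul (hc.pow_succ 1)).const_mul (2 * μ / 3))).add
    ((hF.mul ((hb.pow_succ 1).mul hc)).const_mul (2 * μ / 3))).sub
    ((hb.pow_succ 3).const_mul (μ / 6))).sub
    (((hF.pow_succ 4).mul hc).const_mul (μ ^ 2 / 3)) |>.sub
    (((hF.pow_succ 3).mul (hb.pow_succ 1)).const_mul (5 * μ ^ 2 / 6))).sub
    ((hF.pow_succ 7).const_mul (μ ^ 3 / 24))

lemma partialX_secondEnergyFlux (hF : IsSchwartzOnStrip T F) (μ x t : ℝ) :
    partialX (secondEnergyFlux μ F) (x, t) =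
      2 * partialX^[2] F (x, t) * partialX^[2] (partialT F) (x, t) -
        10 * μ / 3 * (F (x, t) * partialT F (x, t) * partialX F (x, t) ^ 2 +
          F (x, t) ^ 2 * partialX F (x, t) * partialX (partialT F) (x, t)) +
        μ ^ 2 / 3 * F (x, t) ^ 5 * partialT F (x, t) -
        ((10 * μ / 3 * (F (x, t) * partialX F (x, t) ^ 2 +
            F (x, t) ^ 2 * partialX^[2] F (x, t)) + μ ^ 2 / 3 * F (x, t) ^ 5) *
            mkdvForcing μ F (x, t) -
          2 * partialX^[3] F (x, t) * partialX (mkdvForcing μ F) (x, t)) := by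
  have ha := hF.hasDerivAt_partialX x t
  have hb := hF.partialX.hasDerivAt_partialX x t
  have hc := (hF.iterate_partialX 2).hasDerivAt_partialX x t
  have hd := (hF.iterate_partialX 3).hasDerivAt_partialX x t
  have hp := hF.partialT.hasDerivAt_partialX x t
  have hq := hF.partialT.partialX.hasDerivAt_partialX x t
  rw [((hF.secondEnergyFlux μ).hasDerivAt_partialX x t).unique
    (((((((((hc.mul hq).const_mul 2).add (hd.pow 2)).sub
      (((ha.pow 2).mul (hb.mul hp)).const_mul (10 * μ / 3))).sub
      (((ha.pow 2).mul (hc.pow 2)).const_mul (2 * μ / 3))).add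
      ((ha.mul ((hb.pow 2).mul hc)).const_mul (2 * μ / 3))).sub
      ((hb.pow 4).const_mul (μ / 6))).sub
      (((ha.pow 5).mul hc).const_mul (μ ^ 2 / 3)) |>.sub
      (((ha.pow 4).mul (hb.pow 2)).const_mul (5 * μ ^ 2 / 6))).sub
      ((ha.pow 8).const_mul (μ ^ 3 / 24))), ← hF.partialX_partialT_add μ, mkdvForcing]
  simp only [Function.iterate_succ_apply, Function.iterate_zero_apply, Pi.pow_apply, Pi.mul_apply]
  ring

lemma hasDerivAt_integral_secondEnergy (hF : IsSchwartzOnStrip T F) (μ : ℝ)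
    (ht : t ∈ Set.Ioo (-T) T) :
    HasDerivAt (fun s => ∫ x, (partialX^[2] F (x, s) ^ 2 -
        5 * μ / 3 * (F (x, s) ^ 2 * partialX F (x, s) ^ 2) + μ ^ 2 / 18 * F (x, s) ^ 6))
      (∫ x, ((10 * μ / 3 * (F (x, t) * partialX F (x, t) ^ 2 +
            F (x, t) ^ 2 * partialX^[2] F (x, t)) + μ ^ 2 / 3 * F (x, t) ^ 5) *
            mkdvForcing μ F (x, t) -
          2 * partialX^[3] F (x, t) * partialX (mkdvForcing μ F) (x, t))) t := by
  have hF₁ := hF.partialX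
  have hF₂ := hF.iterate_partialX 2
  have hρ := ((hF₂.pow_succ 1).sub (((hF.pow_succ 1).mul (hF₁.pow_succ 1)).const_mul
    (5 * μ / 3))).add ((hF.pow_succ 5).const_mul (μ ^ 2 / 18))
  refine hρ.hasDerivAt_integral_of_balance (hF.secondEnergyFlux μ) ht (fun x => ?_)
    fun x => (hF.secondEnergyFlux μ).hasDerivAt_partialX x t
  have hF₀t := hF.hasDerivAt_partialT x t
  refine ((((hF₂.hasDerivAt_partialT x t).pow 2).sub (((hF₀t.pow 2).mul
    ((hF₁.hasDerivAt_partialT x t).pow 2)).const_mul (5 * μ / 3))).add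
    ((hF₀t.pow 6).const_mul (μ ^ 2 / 18))).congr_deriv ?_
  rw [partialX_secondEnergyFlux hF, hF.partialT_iterate_partialX 2, ← hF.partialX_partialT]
  simp only [Pi.pow_apply]
  ring

/-- The density of the rate of change of the modified energy of a function `F` solving the
mKdV equation up to the error `mkdvForcing μ F`. -/
noncomputable def modifiedEnergyRate (μ : ℝ) (F : ℝ × ℝ → ℝ) (z : ℝ × ℝ) : ℝ :=
  (2 * F z - 2 * partialX^[2] F z - 2 * μ / 3 * F z ^ 3 + 10 * μ / 3 * (F z * partialX F z ^ 2 +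
    F z ^ 2 * partialX^[2] F z) + μ ^ 2 / 3 * F z ^ 5) * mkdvForcing μ F z -
  2 * partialX^[3] F z * partialX (mkdvForcing μ F) z

lemma IsSchwartzOnStrip.modifiedEnergyRate (hF : IsSchwartzOnStrip T F) (μ : ℝ) :
    IsSchwartzOnStrip T (modifiedEnergyRate μ F) := by
  have hc := hF.iterate_partialX 2
  have hf := hF.mkdvForcing μ
  exact ((((((hF.const_mul 2).sub (hc.const_mul 2)).sub
    ((hF.pow_succ 2).const_mul (2 * μ / 3))).add (((hF.mul (hF.partialX.pow_succ 1)).add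
    ((hF.pow_succ 1).mul hc)).const_mul (10 * μ / 3))).add
    ((hF.pow_succ 4).const_mul (μ ^ 2 / 3))).mul hf).sub
    (((hF.iterate_partialX 3).const_mul 2).mul hf.partialX)

lemma IsSchwartzOnStrip.iteratedDeriv_eq (hF : IsSchwartzOnStrip T F) (n : ℕ) (x t : ℝ) :
    iteratedDeriv n (fun y => F (y, t)) x = MKdV.partialX^[n] F (x, t) := by
  induction n generalizing x with
  | zero => simp
  | succ n ih =>
    rw [iteratedDeriv_succ, funext ih, Function.iterate_succ_apply']
    exact ((hF.iterate_partialX n).hasDerivAt_partialX x t).deriv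

end Energy

/-- The modified energy `A_σ(t)`, as a functional of `U = cosh(σD)u`. Writing `μ²/18` for the last
coefficient makes it almost conserved for every real `μ`. -/
noncomputable def modifiedEnergy (μ : ℝ) (U : ℝ → ℝ → ℝ) (t : ℝ) : ℝ :=
  (∫ x : ℝ, (U x t) ^ 2) + (∫ x : ℝ, (deriv (fun y => U y t) x) ^ 2) +
    (∫ x : ℝ, (iteratedDeriv 2 (fun y => U y t) x) ^ 2) -
    (μ / 6) * (∫ x : ℝ, (U x t) ^ 4) -
    (5 * μ / 3) * (∫ x : ℝ, (U x t) ^ 2 * (deriv (fun y => U y t) x) ^ 2) +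
    (μ ^ 2 / 18) * (∫ x : ℝ, (U x t) ^ 6)

section ModifiedEnergy

variable {T s t : ℝ} {U : ℝ → ℝ → ℝ}

open Function (uncurry)

lemma modifiedEnergy_eq (hU : IsSchwartzOnStrip T (uncurry U)) (μ : ℝ)
    (ht : t ∈ Set.Icc (-T) T) :
    modifiedEnergy μ U t = (∫ x, uncurry U (x, t) ^ 2) +
      (∫ x, (partialX (uncurry U) (x, t) ^ 2 - μ / 6 * uncurry U (x, t) ^ 4)) +
      ∫ x, (partialX^[2] (uncurry U) (x, t) ^ 2 - 5 * μ / 3 * (uncurry U (x, t) ^ 2 *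
        partialX (uncurry U) (x, t) ^ 2) + μ ^ 2 / 18 * uncurry U (x, t) ^ 6) := by
  have hU₁ := hU.partialX
  have hmixed := ((hU.pow_succ 1).mul (hU₁.pow_succ 1)).const_mul (5 * μ / 3)
  have hquartic := ((hU.pow_succ 3).const_mul (μ / 6)).integrable ht
  have hsextic := ((hU.pow_succ 5).const_mul (μ ^ 2 / 18)).integrable ht
  have hU₂ := (hU.iterate_partialX 2).pow_succ 1
  have hderiv (x : ℝ) : deriv (fun y => U y t) x = partialX (uncurry U) (x, t) :=
    (hU.hasDerivAt_partialX x t).deriv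
  have hderiv₂ (x : ℝ) :
      iteratedDeriv 2 (fun y => U y t) x = partialX^[2] (uncurry U) (x, t) :=
    hU.iteratedDeriv_eq 2 x t
  rw [integral_sub ((hU₁.pow_succ 1).integrable ht) hquartic,
    integral_add ((hU₂.sub hmixed).integrable ht) hsextic,
    integral_sub (hU₂.integrable ht) (hmixed.integrable ht), integral_const_mul,
    integral_const_mul, integral_const_mul]
  simp only [modifiedEnergy, hderiv, hderiv₂, Function.uncurry_apply_pair]
  ring

lemma continuousOn_modifiedEnergy (hU : IsSchwartzOnStrip T (uncurry U)) (μ : ℝ) :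
    ContinuousOn (modifiedEnergy μ U) (Set.Icc (-T) T) :=
  (((hU.pow_succ 1).continuousOn_integral.add
    ((hU.partialX.pow_succ 1).sub ((hU.pow_succ 3).const_mul (μ / 6))).continuousOn_integral).add
    ((((hU.iterate_partialX 2).pow_succ 1).sub (((hU.pow_succ 1).mul
      (hU.partialX.pow_succ 1)).const_mul (5 * μ / 3))).add
      ((hU.pow_succ 5).const_mul (μ ^ 2 / 18))).continuousOn_integral).congr
    fun _ ht => modifiedEnergy_eq hU μ ht

lemma hasDerivAt_modifiedEnergy (hU : IsSchwartzOnStrip T (uncurry U)) (μ : ℝ)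
    (ht : t ∈ Set.Ioo (-T) T) :
    HasDerivAt (modifiedEnergy μ U) (∫ x, modifiedEnergyRate μ (uncurry U) (x, t)) t := by
  have ht' := Set.Ioo_subset_Icc_self ht
  have hf := hU.mkdvForcing μ
  have hU₂ := hU.iterate_partialX 2
  have hmass := (hU.const_mul 2).mul hf
  have henergy := (((hU₂.const_mul 2).add
    ((hU.pow_succ 2).const_mul (2 * μ / 3))).const_mul (-1)).mul hf
  have hd := ((hasDerivAt_integral_mass hU μ ht).add (hasDerivAt_integral_energy hU μ ht)).add
    (hasDerivAt_integral_secondEnergy hU μ ht)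
  refine (hd.congr_deriv ?_).congr_of_eventuallyEq ?_
  · simp only [← neg_one_mul (_ + _ : ℝ)]
    rw [← integral_add (hmass.integrable ht') (henergy.integrable ht'),
      ← integral_add ((hmass.add henergy).integrable ht')]
    · refine integral_congr_ae (.of_forall fun x => ?_)
      simp only [modifiedEnergyRate]
      ring
    · refine (((hU.modifiedEnergyRate μ).sub (hmass.add henergy)).integrable ht').congr
        (.of_forall fun x => ?_)
      simp only [modifiedEnergyRate]
      ring
  · filter_upwards [Ioo_mem_nhds ht.1 ht.2] with s hs
    exact modifiedEnergy_eq hU μ (Set.Ioo_subset_Icc_self hs)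

lemma enorm_modifiedEnergy_sub_le (hU : IsSchwartzOnStrip T (uncurry U)) (μ : ℝ)
    (hs : -T ≤ s) (hst : s ≤ t) (ht : t ≤ T) :
    ‖modifiedEnergy μ U t - modifiedEnergy μ U s‖ₑ ≤
      ∫⁻ z in Set.univ ×ˢ Set.Ioo s t, ‖modifiedEnergyRate μ (uncurry U) z‖ₑ := by
  have hrate := hU.modifiedEnergyRate μ
  have hsub : Set.Icc s t ⊆ Set.Icc (-T) T := Set.Icc_subset_Icc hs ht
  have hint : IntervalIntegrable (fun r => ∫ x, modifiedEnergyRate μ (uncurry U) (x, r))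
      volume s t :=
    ContinuousOn.intervalIntegrable_of_Icc hst (hrate.continuousOn_integral.mono hsub)
  rw [← intervalIntegral.integral_eq_sub_of_hasDerivAt_of_le hst
    ((continuousOn_modifiedEnergy hU μ).mono hsub) (fun r hr => hasDerivAt_modifiedEnergy hU μ
    ⟨hs.trans_lt hr.1, hr.2.trans_le ht⟩) hint, intervalIntegral.integral_of_le hst,
    integral_Ioc_eq_integral_Ioo, Measure.volume_eq_prod, ← Measure.prod_restrict,
    Measure.restrict_univ, lintegral_prod_symm _ hrate.continuous.enorm.measurable.aemeasurable]
  exact (enorm_integral_le_lintegral_enorm _).trans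
    (lintegral_mono fun r => enorm_integral_le_lintegral_enorm _)

end ModifiedEnergy

lemma measurable_fourierMul {κ : ℝ → ℂ} {v : ℝ × ℝ → ℝ} (hκ : Measurable κ)
    (hv : Continuous v) : Measurable (fourierMul κ v) :=
  measurable_angFourierInv (G := fun z : ℝ × ℝ => fun ξ => κ ξ * spatialFourier v z.2 ξ)
    ((hκ.comp measurable_snd).mul ((measurable_spatialFourier hv).comp
      (measurable_fst.snd.prodMk measurable_snd))) measurable_fst

section Multilinear

variable {b σ T c d c' d' : ℝ} {o r o' r' : ℕ} {κ χ κ' χ' : ℝ → ℂ} {F : ℝ × ℝ → ℝ}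
  {v : SchwartzMap (ℝ × ℝ) ℝ} {s : Set ℝ}

lemma sq_enorm_fourierMul_le (hb : 1 / 2 < b) (hκ : IsSymbol σ o c κ) (ho : o ≤ 1)
    (hfin : bourgainNormSq b σ (spaceTimeFourier v) < ∞) (z : ℝ × ℝ) :
    ‖fourierMul κ v z‖ₑ ^ 2 ≤ ENNReal.ofReal c ^ 2 *
      (sobolevConst b * bourgainNormSq b σ (spaceTimeFourier v)) := by
  have hweight (ξ : ℝ) : |ξ| ^ o ≤ 1 + |ξ| := by
    interval_cases o
    · simp
    · simp
  have hbound (ξ : ℝ) : ‖κ ξ * spatialFourier v z.2 ξ‖ₑ ≤ ENNReal.ofReal c *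
      (ENNReal.ofReal (1 + |ξ|) * ENNReal.ofReal (Real.cosh (σ * ξ)) *
        ‖spatialFourier v z.2 ξ‖ₑ) := by
    have := hκ.nonneg
    rw [enorm_mul, ← mul_assoc, ← mul_assoc, ← ENNReal.ofReal_mul hκ.nonneg,
      ← ENNReal.ofReal_mul (by positivity), ← ofReal_norm (κ ξ)]
    refine mul_le_mul' (ENNReal.ofReal_le_ofReal ((hκ.norm_le ξ).trans ?_)) le_rfl
    have := Real.cosh_pos (σ * ξ)
    gcongr
    exact hweight ξ
  calc _ ≤ (ENNReal.ofReal c * ∫⁻ ξ, ENNReal.ofReal (1 + |ξ|) *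
        ENNReal.ofReal (Real.cosh (σ * ξ)) * ‖spatialFourier v z.2 ξ‖ₑ) ^ 2 := by
        rw [← lintegral_const_mul' _ _ (by finiteness)]
        exact pow_le_pow_left' ((enorm_angFourierInv_le _ _).trans (lintegral_mono hbound)) 2
    _ ≤ _ := by
        rw [mul_pow]
        exact mul_le_mul' le_rfl (sq_lintegral_weight_mul_enorm_slice_le
          (measurable_spaceTimeFourier v.continuous)
          (ae_angFourierInv_spaceTimeFourier_schwartzMap hb v hfin z.2))

lemma lintegral_sq_enorm_fourierMul_mul_le (hb : 1 / 2 < b) (hF : IsSchwartzOnStrip T F)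
    (hfin : bourgainNormSq b σ (spaceTimeFourier v) < ∞)
    (hlift : ∀ t ∈ Set.Icc (-T) T, IsCoshLiftAt σ t F v) (hs : MeasurableSet s)
    (hsT : s ⊆ Set.Icc (-T) T) (hκ : IsSymbol σ o c κ) (hχ : IsSymbol σ r d χ)
    (ho : o ≤ 3) (hr : r ≤ 3) (hor : o + r ≤ 4) :
    ∫⁻ z in Set.univ ×ˢ s, (‖fourierMul κ v z‖ₑ * ‖fourierMul χ v z‖ₑ) ^ 2 ≤
      4 * bilinearConst b *
        (ENNReal.ofReal (c * d) * bourgainNormSq b σ (spaceTimeFourier v)) ^ 2 := by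
  simp only [← enorm_mul]
  exact lintegral_sq_angFourierInv_mul_le hb hκ hχ ho hr hor
    (measurable_spaceTimeFourier v.continuous) hfin hs
    (fun t _ => ae_angFourierInv_spaceTimeFourier_schwartzMap hb v hfin t)
    (fun t ht => (hlift t (hsT ht)).integrable_mul hF (hsT ht) hκ)
    fun t ht => (hlift t (hsT ht)).integrable_mul hF (hsT ht) hχ

lemma lintegral_enorm_fourierMul_quartic_le (hb : 1 / 2 < b) (hF : IsSchwartzOnStrip T F)
    (hfin : bourgainNormSq b σ (spaceTimeFourier v) < ∞)
    (hlift : ∀ t ∈ Set.Icc (-T) T, IsCoshLiftAt σ t F v) (hs : MeasurableSet s)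
    (hsT : s ⊆ Set.Icc (-T) T) (hκ : IsSymbol σ o c κ) (hχ : IsSymbol σ r d χ)
    (hκ' : IsSymbol σ o' c' κ') (hχ' : IsSymbol σ r' d' χ') (ho : o ≤ 3) (hr : r ≤ 3)
    (hor : o + r ≤ 4) (ho' : o' ≤ 3) (hr' : r' ≤ 3) (hor' : o' + r' ≤ 4) :
    ∫⁻ z in Set.univ ×ˢ s, ‖fourierMul κ v z‖ₑ * ‖fourierMul χ v z‖ₑ *
        (‖fourierMul κ' v z‖ₑ * ‖fourierMul χ' v z‖ₑ) ≤
      4 * bilinearConst b * ENNReal.ofReal (c * d * (c' * d')) *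
        bourgainNormSq b σ (spaceTimeFourier v) ^ 2 := by
  have hmeas {e : ℝ → ℂ} (he : Measurable e) : Measurable fun z => ‖fourierMul e v z‖ₑ :=
    (measurable_fourierMul he v.continuous).enorm
  have hcs := sq_lintegral_mul_le (ν := volume.restrict (Set.univ ×ˢ s))
    ((hmeas hκ.measurable).mul (hmeas hχ.measurable)).aemeasurable
    ((hmeas hκ'.measurable).mul (hmeas hχ'.measurable)).aemeasurable
  refine (ENNReal.pow_le_pow_left_iff two_ne_zero).1 ((hcs.trans (mul_le_mul'
    (lintegral_sq_enorm_fourierMul_mul_le hb hF hfin hlift hs hsT hκ hχ ho hr hor)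
    (lintegral_sq_enorm_fourierMul_mul_le hb hF hfin hlift hs hsT hκ' hχ' ho' hr' hor'))).trans_eq
    ?_)
  rw [ENNReal.ofReal_mul (mul_nonneg hκ.nonneg hχ.nonneg)]
  ring

/-- The eight quartic terms which dominate the rate of change of the modified energy, where `u a`
and `y a` stand for the sizes of `∂ₓᵃ cosh(σD)v` and `∂ₓᵃ sinh(σD)v`. The factors are paired so
that each pair is controlled by a bilinear estimate. -/
noncomputable def quarticMajorant (u y : ℕ → ℝ≥0∞) : ℝ≥0∞ :=
  u 0 * y 0 * (u 1 * y 0) + u 0 * y 0 * (u 0 * y 1) + u 2 * y 0 * (u 1 * y 0) +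
    u 2 * y 0 * (u 0 * y 1) + u 3 * y 0 * (u 2 * y 0) + u 3 * y 0 * (u 1 * y 1) +
    u 3 * y 0 * (u 0 * y 2) + u 3 * u 0 * (y 1 * y 1)

lemma lintegral_quarticMajorant_le_of_le {α : Type*} [MeasurableSpace α] {ν : Measure α}
    {u y : ℕ → α → ℝ≥0∞} {B : ℝ≥0∞} (hu : ∀ a, Measurable (u a)) (hy : ∀ a, Measurable (y a))
    (hmixed : ∀ i j k l, i ≤ 3 → j + 1 ≤ 3 → i + (j + 1) ≤ 4 → k ≤ 3 → l + 1 ≤ 3 →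
      k + (l + 1) ≤ 4 → ∫⁻ z, u i z * y j z * (u k z * y l z) ∂ν ≤ B)
    (hlast : ∫⁻ z, u 3 z * u 0 z * (y 1 z * y 1 z) ∂ν ≤ B) :
    ∫⁻ z, quarticMajorant (u · z) (y · z) ∂ν ≤ 8 * B := by
  unfold quarticMajorant
  iterate 7 rw [lintegral_add_left (by fun_prop)]
  refine (add_le_add (add_le_add (add_le_add (add_le_add (add_le_add (add_le_add (add_le_add
    (hmixed 0 0 1 0 ?_ ?_ ?_ ?_ ?_ ?_) (hmixed 0 0 0 1 ?_ ?_ ?_ ?_ ?_ ?_))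
    (hmixed 2 0 1 0 ?_ ?_ ?_ ?_ ?_ ?_)) (hmixed 2 0 0 1 ?_ ?_ ?_ ?_ ?_ ?_))
    (hmixed 3 0 2 0 ?_ ?_ ?_ ?_ ?_ ?_)) (hmixed 3 0 1 1 ?_ ?_ ?_ ?_ ?_ ?_))
    (hmixed 3 0 0 2 ?_ ?_ ?_ ?_ ?_ ?_)) hlast).trans_eq ?_ <;> first | lia | ring

lemma lintegral_quarticMajorant_le (hb : 1 / 2 < b) (hF : IsSchwartzOnStrip T F)
    (hfin : bourgainNormSq b σ (spaceTimeFourier v) < ∞)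
    (hlift : ∀ t ∈ Set.Icc (-T) T, IsCoshLiftAt σ t F v) (hs : MeasurableSet s)
    (hsT : s ⊆ Set.Icc (-T) T) :
    ∫⁻ z in Set.univ ×ˢ s, quarticMajorant (fun a => ‖fourierMul (coshSymbol σ a) v z‖ₑ)
        (fun a => ‖fourierMul (sinhSymbol σ a) v z‖ₑ) ≤
      8 * (4 * bilinearConst b * ENNReal.ofReal (σ ^ 2) *
        bourgainNormSq b σ (spaceTimeFourier v) ^ 2) := by
  have hquartic {o r o' r' : ℕ} {c d c' d' : ℝ} {κ χ κ' χ' : ℝ → ℂ} (hκ : IsSymbol σ o c κ)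
      (hχ : IsSymbol σ r d χ) (hκ' : IsSymbol σ o' c' κ') (hχ' : IsSymbol σ r' d' χ') :=
    lintegral_enorm_fourierMul_quartic_le hb hF hfin hlift hs hsT hκ hχ hκ' hχ'
  have hu := isSymbol_coshSymbol σ
  have hy := isSymbol_sinhSymbol σ
  refine lintegral_quarticMajorant_le_of_le
    (fun a => (measurable_fourierMul (hu a).measurable v.continuous).enorm)
    (fun a => (measurable_fourierMul (hy a).measurable v.continuous).enorm)
    (fun i j k l hi hj hij hk hl hkl => ?_) ?_
  · convert hquartic (hu i) (hy j) (hu k) (hy l) hi hj hij hk hl hkl using 4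
    rw [one_mul, ← sq, sq_abs]
  · convert hquartic (hu 3) (hu 0) (hy 1) (hy 1) (by lia) (by lia) (by lia) (by lia) (by lia)
      (by lia) using 4
    rw [one_mul, one_mul, ← sq, sq_abs]

end Multilinear

section Pointwise

lemma enorm_complex_ofReal (r : ℝ) : ‖(r : ℂ)‖ₑ = ‖r‖ₑ := by
  rw [← ofReal_norm, norm_real, ofReal_norm]

lemma enorm_ofNat {𝕜 : Type*} [RCLike 𝕜] (n : ℕ) [n.AtLeastTwo] :
    ‖(ofNat(n) : 𝕜)‖ₑ = ofNat(n) := by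
  rw [← ofReal_norm, RCLike.norm_ofNat, ENNReal.ofReal_ofNat]

lemma abs_energyGradient_le {μ a b c L : ℝ} (hμ : |μ| ≤ 1) (ha : a ^ 2 ≤ L) (hb : b ^ 2 ≤ L) :
    |2 * a - 2 * c - 2 * μ / 3 * a ^ 3 + 10 * μ / 3 * (a * b ^ 2 + a ^ 2 * c) +
      μ ^ 2 / 3 * a ^ 5| ≤ 4 * (1 + L + L ^ 2) * (|a| + |c|) := by
  have hL : 0 ≤ L := (sq_nonneg a).trans ha
  have hμ₂ : |μ ^ 2| ≤ 1 := by
    rw [abs_pow]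
    exact pow_le_one₀ (abs_nonneg μ) hμ
  have hscale {q r x y : ℝ} (hq : |q| ≤ 1) (hr : 0 ≤ r) (hx : |x| ≤ y) : |r * (q * x)| ≤ r * y := by
    rw [abs_mul, abs_mul, abs_of_nonneg hr]
    exact mul_le_mul_of_nonneg_left ((mul_le_of_le_one_left (abs_nonneg x) hq).trans hx) hr
  have hcubic : |2 / 3 * (μ * (a ^ 2 * a))| ≤ 2 / 3 * (L * |a|) := by
    refine hscale hμ (by norm_num) ?_
    rw [abs_mul, abs_of_nonneg (sq_nonneg a)]
    gcongr
  have hmixed : |10 / 3 * (μ * (b ^ 2 * a + a ^ 2 * c))| ≤ 10 / 3 * (L * |a| + L * |c|) := by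
    refine hscale hμ (by norm_num) ((abs_add_le _ _).trans ?_)
    rw [abs_mul, abs_mul, abs_of_nonneg (sq_nonneg a), abs_of_nonneg (sq_nonneg b)]
    gcongr
  have hquintic : |1 / 3 * (μ ^ 2 * ((a ^ 2) ^ 2 * a))| ≤ 1 / 3 * (L ^ 2 * |a|) := by
    refine hscale hμ₂ (by norm_num) ?_
    rw [abs_mul, abs_of_nonneg (sq_nonneg (a ^ 2))]
    gcongr
  calc _ = |2 * a - 2 * c - 2 / 3 * (μ * (a ^ 2 * a)) + 10 / 3 * (μ * (b ^ 2 * a + a ^ 2 * c)) +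
        1 / 3 * (μ ^ 2 * ((a ^ 2) ^ 2 * a))| := by ring_nf
    _ ≤ 2 * |a| + 2 * |c| + 2 / 3 * (L * |a|) + 10 / 3 * (L * |a| + L * |c|) +
        1 / 3 * (L ^ 2 * |a|) := by
      refine (abs_add_le _ _).trans (add_le_add ((abs_add_le _ _).trans (add_le_add
        ((abs_sub _ _).trans (add_le_add ((abs_sub _ _).trans_eq ?_) hcubic)) hmixed)) hquintic)
      rw [abs_mul, abs_mul, abs_two]
    _ ≤ 4 * (1 + L + L ^ 2) * (|a| + |c|) := by
      have : 0 ≤ 2 * (|a| + |c|) + 2 / 3 * (L * |c|) + 11 / 3 * (L ^ 2 * |a|) +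
        4 * (L ^ 2 * |c|) := by positivity
      linarith

lemma enorm_energyGradient_le {μ a b c : ℝ} {L : ℝ≥0∞} (hμ : |μ| ≤ 1) (ha : ‖a‖ₑ ^ 2 ≤ L)
    (hb : ‖b‖ₑ ^ 2 ≤ L) :
    ‖2 * a - 2 * c - 2 * μ / 3 * a ^ 3 + 10 * μ / 3 * (a * b ^ 2 + a ^ 2 * c) +
      μ ^ 2 / 3 * a ^ 5‖ₑ ≤ 4 * (1 + L + L ^ 2) * (‖a‖ₑ + ‖c‖ₑ) := by
  have hsq (r : ℝ) : ‖r‖ₑ ^ 2 = ENNReal.ofReal (r ^ 2) := by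
    rw [Real.enorm_eq_ofReal_abs, ← ENNReal.ofReal_pow (abs_nonneg r), sq_abs]
  rw [hsq] at ha hb
  have hmax : ENNReal.ofReal (max (a ^ 2) (b ^ 2)) ≤ L :=
    (ENNReal.ofReal_max _ _).trans_le (max_le ha hb)
  have h := ENNReal.ofReal_le_ofReal
    (abs_energyGradient_le (c := c) hμ (le_max_left (a ^ 2) (b ^ 2)) (le_max_right _ _))
  rw [← Real.enorm_eq_ofReal_abs, ENNReal.ofReal_mul (by positivity),
    ENNReal.ofReal_mul (by positivity), ENNReal.ofReal_add (by positivity) (by positivity),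
    ENNReal.ofReal_add (by positivity) (by positivity),
    ENNReal.ofReal_add (abs_nonneg a) (abs_nonneg c), ENNReal.ofReal_pow (by positivity),
    ENNReal.ofReal_one, ENNReal.ofReal_ofNat, ← Real.enorm_eq_ofReal_abs,
    ← Real.enorm_eq_ofReal_abs] at h
  exact h.trans (by gcongr)

lemma enorm_mul_le_of_abs_le_one {μ : ℝ} (hμ : |μ| ≤ 1) (w : ℂ) : ‖-(μ : ℂ) * w‖ₑ ≤ ‖w‖ₑ := by
  rw [enorm_mul, enorm_neg, enorm_complex_ofReal, Real.enorm_eq_ofReal_abs]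
  exact mul_le_of_le_one_left' (ENNReal.ofReal_le_one.2 hμ)

lemma forcing_pairing_le_quarticMajorant {K : ℝ≥0∞} (hK : 1 ≤ K) (u y : ℕ → ℝ≥0∞) :
    4 * K * (u 0 + u 2) * (y 0 ^ 2 * u 1 + 2 * u 0 * y 0 * y 1) +
      2 * u 3 * (y 0 ^ 2 * u 2 + 4 * y 0 * y 1 * u 1 + 2 * u 0 * y 1 ^ 2 +
        2 * u 0 * y 0 * y 2) ≤ 8 * K * quarticMajorant u y := by
  refine (add_le_add le_rfl (le_mul_of_one_le_left' hK)).trans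
    (le_of_le_of_eq (le_self_add (b := K * (4 * (u 0 * y 0 * (u 1 * y 0)) +
      4 * (u 2 * y 0 * (u 1 * y 0)) + 6 * (u 3 * y 0 * (u 2 * y 0)) +
      4 * (u 3 * y 0 * (u 0 * y 2)) + 4 * (u 3 * u 0 * (y 1 * y 1))))) ?_)
  rw [quarticMajorant]
  ring

variable {σ T t μ : ℝ} {F : ℝ × ℝ → ℝ} {v : ℝ × ℝ → ℝ}

lemma enorm_mkdvForcing_le (hF : IsSchwartzOnStrip T F)
    (hv : IsSchwartzOnStrip T v) (hlift : ∀ s ∈ Set.Icc (-T) T, IsCoshLiftAt σ s F v)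
    (ht : t ∈ Set.Ioo (-T) T) (hpde : ∀ x, mkdvForcing μ v (x, t) = 0) (hμ : |μ| ≤ 1) (x : ℝ) :
    ‖mkdvForcing μ F (x, t)‖ₑ ≤
      ‖sinhLift σ v (x, t)‖ₑ ^ 2 * ‖partialX F (x, t)‖ₑ +
        2 * ‖F (x, t)‖ₑ * ‖sinhLift σ v (x, t)‖ₑ * ‖sinhLift σ (partialX v) (x, t)‖ₑ := by
  have h := enorm_mul_le_of_abs_le_one hμ (sinhLift σ v (x, t) ^ 2 * partialX F (x, t) +
    2 * F (x, t) * sinhLift σ v (x, t) * sinhLift σ (partialX v) (x, t))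
  rw [← mkdvForcing_eq hF hv hlift ht hpde, enorm_complex_ofReal] at h
  refine h.trans ((enorm_add_le _ _).trans_eq ?_)
  simp only [enorm_mul, enorm_pow, enorm_complex_ofReal, enorm_ofNat]

lemma enorm_partialX_mkdvForcing_le (hF : IsSchwartzOnStrip T F)
    (hv : IsSchwartzOnStrip T v) (hlift : ∀ s ∈ Set.Icc (-T) T, IsCoshLiftAt σ s F v)
    (ht : t ∈ Set.Ioo (-T) T) (hpde : ∀ x, mkdvForcing μ v (x, t) = 0) (hμ : |μ| ≤ 1) (x : ℝ) :
    ‖partialX (mkdvForcing μ F) (x, t)‖ₑ ≤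
      ‖sinhLift σ v (x, t)‖ₑ ^ 2 * ‖partialX^[2] F (x, t)‖ₑ +
        4 * ‖sinhLift σ v (x, t)‖ₑ * ‖sinhLift σ (partialX v) (x, t)‖ₑ * ‖partialX F (x, t)‖ₑ +
        2 * ‖F (x, t)‖ₑ * ‖sinhLift σ (partialX v) (x, t)‖ₑ ^ 2 +
        2 * ‖F (x, t)‖ₑ * ‖sinhLift σ v (x, t)‖ₑ * ‖sinhLift σ (partialX^[2] v) (x, t)‖ₑ := by
  have h := enorm_mul_le_of_abs_le_one hμ (sinhLift σ v (x, t) ^ 2 * partialX^[2] F (x, t) +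
    4 * sinhLift σ v (x, t) * sinhLift σ (partialX v) (x, t) * partialX F (x, t) +
    2 * F (x, t) * sinhLift σ (partialX v) (x, t) ^ 2 +
    2 * F (x, t) * sinhLift σ v (x, t) * sinhLift σ (partialX^[2] v) (x, t))
  rw [← partialX_mkdvForcing_eq hF hv hlift ht hpde, enorm_complex_ofReal] at h
  refine h.trans ((enorm_add_le _ _).trans ((add_le_add (enorm_add₃_le) le_rfl).trans_eq ?_))
  simp only [enorm_mul, enorm_pow, enorm_complex_ofReal, enorm_ofNat]

lemma enorm_modifiedEnergyRate_le {L : ℝ≥0∞} (hF : IsSchwartzOnStrip T F)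
    (hv : IsSchwartzOnStrip T v) (hlift : ∀ s ∈ Set.Icc (-T) T, IsCoshLiftAt σ s F v)
    (ht : t ∈ Set.Ioo (-T) T) (hpde : ∀ x, mkdvForcing μ v (x, t) = 0) (hμ : |μ| ≤ 1) (x : ℝ)
    (hL₀ : ‖F (x, t)‖ₑ ^ 2 ≤ L) (hL₁ : ‖partialX F (x, t)‖ₑ ^ 2 ≤ L) :
    ‖modifiedEnergyRate μ F (x, t)‖ₑ ≤ 8 * (1 + L + L ^ 2) *
      quarticMajorant (fun a => ‖partialX^[a] F (x, t)‖ₑ)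
        (fun a => ‖fourierMul (sinhSymbol σ a) v (x, t)‖ₑ) := by
  have hY := sinhLift_iterate_partialX (σ := σ) hv (Set.Ioo_subset_Icc_self ht)
  calc _ ≤ 4 * (1 + L + L ^ 2) * (‖F (x, t)‖ₑ + ‖partialX^[2] F (x, t)‖ₑ) *
        ‖mkdvForcing μ F (x, t)‖ₑ +
        2 * ‖partialX^[3] F (x, t)‖ₑ * ‖partialX (mkdvForcing μ F) (x, t)‖ₑ := by
        rw [modifiedEnergyRate]
        refine enorm_sub_le.trans ?_
        rw [enorm_mul, enorm_mul, enorm_mul, enorm_ofNat]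
        exact add_le_add (mul_le_mul' (enorm_energyGradient_le hμ hL₀ hL₁) le_rfl) le_rfl
    _ ≤ _ := (add_le_add (mul_le_mul' le_rfl (enorm_mkdvForcing_le hF hv hlift ht hpde hμ x))
        (mul_le_mul' le_rfl (enorm_partialX_mkdvForcing_le hF hv hlift ht hpde hμ x)))
    _ ≤ _ := by
        simp only [← hY]
        exact forcing_pairing_le_quarticMajorant (le_add_right le_self_add)
          (fun a => ‖partialX^[a] F (x, t)‖ₑ) (fun a => ‖sinhLift σ (partialX^[a] v) (x, t)‖ₑ)

end Pointwise

/-- The constant of the almost conservation law. -/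
noncomputable def incrementConst (b : ℝ) : ℝ≥0∞ :=
  256 * bilinearConst b * (1 + sobolevConst b) ^ 2

lemma incrementConst_lt_top {b : ℝ} (hb : 1 / 2 < b) : incrementConst b < ∞ := by
  have := (bilinearConst_lt_top hb).ne
  have := (sobolevConst_lt_top hb).ne
  exact lt_top_iff_ne_top.2 (by unfold incrementConst; finiteness)

lemma one_add_mul_add_mul_sq_le (S M : ℝ≥0∞) :
    1 + S * M + (S * M) ^ 2 ≤ (1 + S) ^ 2 * (1 + M + M ^ 2) := by
  refine le_of_le_of_eq (le_self_add (b := M + M ^ 2 + 2 * S + S * M + 2 * S * M ^ 2 + S ^ 2 +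
    S ^ 2 * M)) ?_
  ring

section Increment

variable {b σ T s t μ : ℝ} {U : ℝ → ℝ → ℝ} {F : ℝ × ℝ → ℝ} {v : SchwartzMap (ℝ × ℝ) ℝ}

lemma lintegral_enorm_modifiedEnergyRate_le (hb : 1 / 2 < b) (hF : IsSchwartzOnStrip T F)
    (hfin : bourgainNormSq b σ (spaceTimeFourier v) < ∞)
    (hlift : ∀ r ∈ Set.Icc (-T) T, IsCoshLiftAt σ r F v)
    (hpde : ∀ r ∈ Set.Ioo (-T) T, ∀ x, mkdvForcing μ v (x, r) = 0) (hμ : |μ| ≤ 1)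
    (hs : -T ≤ s) (ht : t ≤ T) :
    ∫⁻ z in Set.univ ×ˢ Set.Ioo s t, ‖modifiedEnergyRate μ F z‖ₑ ≤
      incrementConst b * ENNReal.ofReal (σ ^ 2) * bourgainNormSq b σ (spaceTimeFourier v) ^ 2 *
        (1 + bourgainNormSq b σ (spaceTimeFourier v) +
          bourgainNormSq b σ (spaceTimeFourier v) ^ 2) := by
  set M := bourgainNormSq b σ (spaceTimeFourier v)
  have hsub : Set.Ioo s t ⊆ Set.Ioo (-T) T := Set.Ioo_subset_Ioo hs ht
  have hrate : ∀ z ∈ Set.univ ×ˢ Set.Ioo s t, ‖modifiedEnergyRate μ F z‖ₑ ≤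
      8 * (1 + sobolevConst b * M + (sobolevConst b * M) ^ 2) *
        quarticMajorant (fun a => ‖fourierMul (coshSymbol σ a) v z‖ₑ)
          (fun a => ‖fourierMul (sinhSymbol σ a) v z‖ₑ) := by
    rintro ⟨x, r⟩ ⟨-, hr⟩
    have hr' := Set.Ioo_subset_Icc_self (hsub hr)
    have hU (a : ℕ) := (hlift r hr').fourierMul_coshSymbol hF hr' a x
    have hsup {a : ℕ} (ha : a ≤ 1) : ‖partialX^[a] F (x, r)‖ₑ ^ 2 ≤ sobolevConst b * M := by
      simpa [hU, enorm_complex_ofReal] using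
        sq_enorm_fourierMul_le hb (isSymbol_coshSymbol σ a) ha hfin (x, r)
    simpa only [hU, enorm_complex_ofReal] using
      enorm_modifiedEnergyRate_le hF (isSchwartzOnStrip_schwartzMap T v) hlift (hsub hr)
        (hpde r (hsub hr)) hμ x (hsup zero_le_one) (hsup le_rfl)
  have hconst : 8 * (1 + sobolevConst b * M + (sobolevConst b * M) ^ 2) ≠ ∞ := by
    have := (sobolevConst_lt_top hb).ne
    have := hfin.ne
    finiteness
  calc _ ≤ 8 * (1 + sobolevConst b * M + (sobolevConst b * M) ^ 2) *
        (8 * (4 * bilinearConst b * ENNReal.ofReal (σ ^ 2) * M ^ 2)) := by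
        refine (setLIntegral_mono' (MeasurableSet.univ.prod measurableSet_Ioo) hrate).trans ?_
        rw [lintegral_const_mul' _ _ hconst]
        exact mul_le_mul' le_rfl (lintegral_quarticMajorant_le hb hF hfin hlift measurableSet_Ioo
          (hsub.trans Set.Ioo_subset_Icc_self))
    _ ≤ 8 * ((1 + sobolevConst b) ^ 2 * (1 + M + M ^ 2)) *
        (8 * (4 * bilinearConst b * ENNReal.ofReal (σ ^ 2) * M ^ 2)) := by
        gcongr
        exact one_add_mul_add_mul_sq_le _ _
    _ = _ := by
        rw [incrementConst]
        ring

end Increment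

/-- The norm of the Bourgain space `X^{σ,2,b}` with hyperbolic cosine weight. -/
noncomputable def bourgainNorm (b σ : ℝ) (v : ℝ × ℝ → ℝ) : ℝ≥0∞ :=
  (∫⁻ p : ℝ × ℝ, ENNReal.ofReal ((Real.cosh (σ * |p.1|)) ^ 2 * (1 + |p.1|) ^ 4 *
    (1 + |p.2 - p.1 ^ 3|) ^ (2 * b)) * ‖spaceTimeFourier v p‖ₑ ^ 2) ^ ((1 : ℝ) / 2)

lemma cosh_mul_abs (σ ξ : ℝ) : Real.cosh (σ * |ξ|) = Real.cosh (σ * ξ) := by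
  rw [← Real.cosh_abs, abs_mul, abs_abs, ← abs_mul, Real.cosh_abs]

lemma bourgainNorm_sq (b σ : ℝ) (v : ℝ × ℝ → ℝ) :
    bourgainNorm b σ v ^ 2 = bourgainNormSq b σ (spaceTimeFourier v) := by
  rw [bourgainNorm, ← ENNReal.rpow_natCast, ← ENNReal.rpow_mul, Nat.cast_ofNat,
    one_div_mul_cancel two_ne_zero, ENNReal.rpow_one, bourgainNormSq]
  refine lintegral_congr fun p => ?_
  have := Real.cosh_pos (σ * p.1)
  rw [bourgainDensity, mul_pow, ← ENNReal.ofReal_pow (by positivity), cosh_mul_abs, mul_comm 2 b,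
    Real.rpow_mul (by positivity), Real.rpow_two, modulation]
  ring_nf

section Extension

variable {σ T t μ : ℝ} {u : ℝ → ℝ → ℝ} {v : ℝ × ℝ → ℝ}

lemma mkdvForcing_eq_zero_of_extension (hv : IsSchwartzOnStrip T v)
    (hvu : ∀ x t, t ∈ Set.Icc (-T) T → v (x, t) = u x t)
    (hu : ∀ x t, t ∈ Set.Icc (-T) T → deriv (fun τ => u x τ) t +
      iteratedDeriv 3 (fun y => u y t) x + μ * (u x t) ^ 2 * deriv (fun y => u y t) x = 0)
    (ht : t ∈ Set.Ioo (-T) T) (x : ℝ) : mkdvForcing μ v (x, t) = 0 := by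
  have ht' := Set.Ioo_subset_Icc_self ht
  have hspace : (fun y => u y t) = fun y => v (y, t) := funext fun y => (hvu y t ht').symm
  have htime : (fun τ => u x τ) =ᶠ[𝓝 t] fun τ => v (x, τ) := by
    filter_upwards [Ioo_mem_nhds ht.1 ht.2] with τ hτ
    exact (hvu x τ (Set.Ioo_subset_Icc_self hτ)).symm
  have h := hu x t ht'
  rw [htime.deriv_eq, hspace, (hv.hasDerivAt_partialT x t).deriv,
    (hv.hasDerivAt_partialX x t).deriv, hv.iteratedDeriv_eq, ← hvu x t ht', mul_assoc] at h
  exact h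

lemma fourierMul_coshSymbol_of_extension (hvu : ∀ x t, t ∈ Set.Icc (-T) T → v (x, t) = u x t)
    (ht : t ∈ Set.Icc (-T) T) (x : ℝ) :
    fourierMul (coshSymbol σ 0) v (x, t) = (1 / (2 * Real.pi) : ℂ) *
      ∫ ξ : ℝ, cexp (I * x * ξ) * ((Real.cosh (σ * |ξ|) : ℝ) : ℂ) *
        ∫ y : ℝ, cexp (-I * y * ξ) * (u y t : ℂ) := by
  simp only [fourierMul, angFourierInv, coshSymbol, spatialFourier, angFourier, hvu _ t ht,
    cosh_mul_abs, pow_zero, one_mul, mul_assoc]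

end Extension

lemma ofReal_le_ofReal_add_of_enorm_sub_le {a c : ℝ} {B : ℝ≥0∞} (h : ‖a - c‖ₑ ≤ B) :
    ENNReal.ofReal a ≤ ENNReal.ofReal c + B := by
  refine le_trans ?_ (add_le_add le_rfl h)
  rw [Real.enorm_eq_ofReal_abs]
  exact (ENNReal.ofReal_le_ofReal (by linarith [le_abs_self (a - c)])).trans
    (ENNReal.ofReal_add_le (p := c) (q := |a - c|))

end MKdV

open MKdV in
theorem almost_conservation_law_general {b : ℝ} (hb : 1 / 2 < b) :
    ∃ C > 0, ∀ σ μ T : ℝ, σ ≠ 0 → |μ| ≤ 1 → ∀ U : ℝ → ℝ → ℝ,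
      IsSchwartzOnStrip T (Function.uncurry U) → ∀ v : SchwartzMap (ℝ × ℝ) ℝ,
      (∀ x, ∀ t ∈ Set.Icc (-T) T, (U x t : ℂ) = fourierMul (coshSymbol σ 0) v (x, t)) →
      (∀ t ∈ Set.Ioo (-T) T, ∀ x, mkdvForcing μ v (x, t) = 0) →
      ∀ s ∈ Set.Icc (-T) T, ∀ t ∈ Set.Icc (-T) T,
      ‖modifiedEnergy μ U t - modifiedEnergy μ U s‖ₑ ≤ ENNReal.ofReal (C * σ ^ 2) *
        bourgainNorm b σ v ^ 4 * (1 + bourgainNorm b σ v ^ 2 + bourgainNorm b σ v ^ 4) := by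
  have hpow (N : ℝ≥0∞) : N ^ 4 = (N ^ 2) ^ 2 := by rw [← pow_mul]
  refine ⟨(incrementConst b).toReal + 1, by positivity, ?_⟩
  intro σ μ T hσ hμ U hU v hUv hpde s hs t ht
  have hC : incrementConst b * ENNReal.ofReal (σ ^ 2) ≤
      ENNReal.ofReal (((incrementConst b).toReal + 1) * σ ^ 2) := by
    rw [ENNReal.ofReal_mul (by positivity)]
    exact mul_le_mul' ((ENNReal.le_ofReal_iff_toReal_le (incrementConst_lt_top hb).ne
      (by positivity)).2 (by linarith)) le_rfl
  wlog hst : s ≤ t generalizing s t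
  · rw [← enorm_neg, neg_sub]
    exact this t ht s hs (le_of_not_ge hst)
  rw [hpow, bourgainNorm_sq]
  rcases eq_or_ne (bourgainNormSq b σ (spaceTimeFourier v)) ∞ with htop | htop
  · have hpos : ENNReal.ofReal (((incrementConst b).toReal + 1) * σ ^ 2) ≠ 0 :=
      (ENNReal.ofReal_pos.2 (by positivity)).ne'
    simp [htop, ENNReal.mul_top hpos]
  · have hfin := htop.lt_top
    exact (enorm_modifiedEnergy_sub_le hU μ hs.1 hst ht.2).trans
      ((lintegral_enorm_modifiedEnergyRate_le hb hU hfin (fun r hr =>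
        isCoshLiftAt_of_eq_fourierMul hb hU v hfin hr fun x => hUv x r hr) hpde hμ hs.1 ht.2).trans
      (mul_le_mul' (mul_le_mul' hC le_rfl) le_rfl))

/-- Theorem 1.2 of the paper (almost conservation law): there exist `b ∈ (1/2,1)` and
`C > 0`, independent of `u`, `σ` and `T₀`, such that for any smooth solution `u` of mKdV
on `[-T₀,T₀]` with `U = cosh(σ|Dₓ|)u` well defined and Schwartz in `x` uniformly in `t`,
the modified energy `A_σ` satisfies
`A_σ(t) ≤ A_σ(0) + C σ² N⁴ (1 + N² + N⁴)` for `t ∈ [0,T₀]`, where `N` is the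
`X^{σ,2,b}`-norm (with hyperbolic-cosine weight) of any Schwartz extension `v` of `u`. -/
theorem almost_conservation_law :
    ∃ b ∈ Set.Ioo (1 / 2 : ℝ) 1, ∃ C > 0,
      ∀ σ : ℝ, 0 < σ → ∀ μ : ℝ, (μ = 1 ∨ μ = -1) → ∀ T₀ : ℝ, 0 < T₀ →
      ∀ u U : ℝ → ℝ → ℝ,
      ContDiff ℝ (⊤ : ℕ∞) (Function.uncurry u) →
      (∀ x t : ℝ, t ∈ Set.Icc (-T₀) T₀ →
        deriv (fun τ => u x τ) t + iteratedDeriv 3 (fun y => u y t) x +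
          μ * (u x t) ^ 2 * deriv (fun y => u y t) x = 0) →
      (∀ x t : ℝ, (U x t : ℂ) = (1 / (2 * Real.pi) : ℂ) *
        ∫ ξ : ℝ, Complex.exp (Complex.I * x * ξ) * ((Real.cosh (σ * |ξ|) : ℝ) : ℂ) *
          ∫ y : ℝ, Complex.exp (-Complex.I * y * ξ) * (u y t : ℂ)) →
      ContDiff ℝ (⊤ : ℕ∞) (Function.uncurry U) →
      (∀ k n : ℕ, ∃ D : ℝ, ∀ x t : ℝ, t ∈ Set.Icc (-T₀) T₀ →
        (1 + |x|) ^ k * ‖iteratedFDeriv ℝ n (Function.uncurry U) (x, t)‖ ≤ D) →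
      ∀ t ∈ Set.Icc (0 : ℝ) T₀,
      ∀ v : SchwartzMap (ℝ × ℝ) ℝ, (∀ x t' : ℝ, t' ∈ Set.Icc (-T₀) T₀ → v (x, t') = u x t') →
      ∀ A : ℝ → ℝ,
      (∀ τ : ℝ, A τ =
        (∫ x : ℝ, (U x τ) ^ 2) + (∫ x : ℝ, (deriv (fun y => U y τ) x) ^ 2) +
          (∫ x : ℝ, (iteratedDeriv 2 (fun y => U y τ) x) ^ 2) -
          (μ / 6) * (∫ x : ℝ, (U x τ) ^ 4) -
          (5 * μ / 3) * (∫ x : ℝ, (U x τ) ^ 2 * (deriv (fun y => U y τ) x) ^ 2) +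
          (1 / 18) * (∫ x : ℝ, (U x τ) ^ 6)) →
      ∀ N : ℝ≥0∞,
      N = (∫⁻ p : ℝ × ℝ,
          ENNReal.ofReal ((Real.cosh (σ * |p.1|)) ^ 2 * (1 + |p.1|) ^ 4 *
            (1 + |p.2 - p.1 ^ 3|) ^ (2 * b)) *
          (‖∫ q : ℝ × ℝ, Complex.exp (-Complex.I * (q.1 * p.1 + q.2 * p.2)) * (v q : ℂ)‖₊ :
            ℝ≥0∞) ^ 2) ^ ((1 : ℝ) / 2) →
      ENNReal.ofReal (A t) ≤
        ENNReal.ofReal (A 0) +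
          ENNReal.ofReal (C * σ ^ 2) * N ^ 4 * (1 + N ^ 2 + N ^ 4) := by
  obtain ⟨C, hC, hlaw⟩ := almost_conservation_law_general (b := 3 / 4) (by norm_num)
  refine ⟨3 / 4, by norm_num, C, hC, ?_⟩
  intro σ hσ μ hμ T₀ hT u U _ hu hU hU_smooth hU_decay t ht v hv A hA N hN
  have hA_eq (τ : ℝ) : A τ = MKdV.modifiedEnergy μ U τ := by
    rw [hA, MKdV.modifiedEnergy]
    rcases hμ with rfl | rfl <;> norm_num
  have hμ_le : |μ| ≤ 1 := by rcases hμ with rfl | rfl <;> norm_num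
  obtain rfl : N = MKdV.bourgainNorm (3 / 4) σ v := hN
  rw [hA_eq, hA_eq]
  exact MKdV.ofReal_le_ofReal_add_of_enorm_sub_le (hlaw σ μ T₀ hσ.ne' hμ_le U
    ⟨hU_smooth, hU_decay⟩ v
    (fun x r hr => (hU x r).trans (MKdV.fourierMul_coshSymbol_of_extension hv hr x).symm)
    (fun r hr x => MKdV.mkdvForcing_eq_zero_of_extension
      (MKdV.isSchwartzOnStrip_schwartzMap T₀ v) hv hu hr x)
    0 ⟨by linarith, hT.le⟩ t ⟨by linarith [ht.1], ht.2⟩)
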